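/- arXiv:math/0501113 — 4 statements merged into one kernel-verified Lean document; each statement's English description precedes it below -/
import Mathlib

section
/- Let Ω be a bounded open convex set in ℝ² containing the origin in its interior, satisfying sup_{θ∈S¹} sup_{δ>0} δ^{-1/2} μ(θ,δ) < ∞, and let 10 ≤ r ≤ R, R^{1/2} ≤ h ≤ R. Let 𝒜 = {x ∈ ℝ² : r − 1/h ≤ ρ*(x) < r + 1/h} be the annulus (the set difference of Ω*₊ = {ρ* < r + 1/h} and Ω*₋ = {ρ* < r − 1/h}), let 𝔸 = 𝒜 ∩ ℤ², and let E₁, …, E_M be the extreme points of the convex hull of 𝔸, arranged in counterclockwise order. Fix j and let S_j be the closed triangle with vertices E_j, E_{j+1} and the origin; let L_j = |E_j E_{j+1}|; let Θ_j be the total (positive) turning of the outward unit normal of ∂Ω* between the boundary points of Ω* lying on the rays from the origin through E_j and through E_{j+1} (this normal is unique at every boundary point since Ω, hence Ω*, is strictly convex under the curvature hypothesis). Let N_j⁻ (respectively N_j⁺) be the number of maximal line segments with endpoints in ℤ² that are contained in 𝒜 ∩ S_j and have E_j (respectively E_{j+1}) as an endpoint. Then there is a constant C, independent of j, r, R, h,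 such that N_j⁻ + N_j⁺ ≤ C (1 + area(𝒜 ∩ S_j) + L_j^{2/3} Θ_j^{1/3}). -/
/-!
The support function `ρ` of `Ω` is a gauge, and `K = {ρ < r - 1/h}` is a convex obstacle. The
maximal segments at the vertex `A` of the triangle end at lattice points of the triangle that are
visible from `A` past `K` and lie in distinct directions; list them clockwise as
`P 0, …, P (N - 1)`.

If the step from `P i` to `P (i + 1)` misses `K`, then so does the lattice triangle
`A, P i, P (i + 1)`. These triangles are disjoint and have area at least `1/2`, hence the area term.

The steps that cross `K` form a convex chain: any two of them span a nonzero integral area, their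
directions lie between the tangents of `{ρ ≤ 1}` at the two ends, and chords joining consecutive
crossings are monotone in a fixed direction and stay within a distance `O(|AB|)` of `A`. Hence the
steps with crossing neighbours have total length `O(L)`, where `L = |AB|`. At least half of `n`
such steps have length `O(L / n)`; any two of these differ in slope by at least a multiple of
`(n / L) ^ 2`, so the total turning is at least a multiple of `n ^ 3 / L ^ 2`, and
`n = O(L ^ (2/3) Θ ^ (1/3))`.
-/

open MeasureTheory Set
open scoped Pointwise RealInnerProductSpace NNReal ENNReal

noncomputable section

abbrev E2 := EuclideanSpace ℝ (Fin 2)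

/-- The embedding of an integer vector into the Euclidean plane. -/
def ek (k : Fin 2 → ℤ) : E2 := (WithLp.equiv 2 (Fin 2 → ℝ)).symm fun i => (k i : ℝ)

/-- Number of lattice points in a set. -/
def latticeCount (S : Set E2) : ℕ := Nat.card {k : Fin 2 → ℤ | ek k ∈ S}

/-- The lattice rest `E_Ω(t) = card(tΩ ∩ ℤ²) − t²·area(Ω)`. -/
def latticeRest (Ω : Set E2) (t : ℝ) : ℝ :=
  (latticeCount (t • Ω) : ℝ) - t ^ 2 * (volume Ω).toReal

/-- The mean square discrepancy `𝒢_Ω(R,h) = ((1/h)∫_R^{R+h} |E_Ω(t)|² dt)^{1/2}`. -/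
def meanSquare (Ω : Set E2) (R h : ℝ) : ℝ :=
  Real.sqrt ((1 / h) * ∫ t in R..(R + h), (latticeRest Ω t) ^ 2)

/-- The support function `ρ*(ξ) = sup {⟨x,ξ⟩ : x ∈ Ω}`. -/
def suppFn (Ω : Set E2) (ξ : E2) : ℝ := sSup ((fun x => ⟪x, ξ⟫) '' Ω)

/-- `μ(θ,δ)`, the diameter of the cap `𝒞(θ,δ) = {x ∈ ∂Ω : ⟨x,θ⟩ ≥ ρ*(θ) − δ}`. -/
def capDiam (Ω : Set E2) (θ : E2) (δ : ℝ) : ℝ :=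
  Metric.diam {x ∈ frontier Ω | suppFn Ω θ - δ ≤ ⟪x, θ⟫}

/-- Curvature bounded below in the generalized sense:
`sup_{θ∈S¹} sup_{δ>0} δ^{-1/2} μ(θ,δ) < ∞`. -/
def CurvBddBelow (Ω : Set E2) : Prop :=
  ∃ K : ℝ, ∀ θ : E2, ‖θ‖ = 1 → ∀ δ : ℝ, 0 < δ → capDiam Ω θ δ ≤ K * Real.sqrt δ

section AreaForm

variable {E : Type*} [NormedAddCommGroup E] [InnerProductSpace ℝ E]
  [Fact (Module.finrank ℝ E = 2)] (o : Orientation ℝ E (Fin 2))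

local notation "ω" => o.areaForm

lemma areaForm_smul_cyclic (x y z : E) :
    ω x y • z + ω y z • x + ω z x • y = 0 := by
  rcases eq_or_ne x 0 with rfl | hx
  · simp
  set v := ω x y • z + ω y z • x + ω z x • y with hv
  have hinner : ⟪x, v⟫ = 0 := by
    rw [hv, inner_add_right, inner_add_right, inner_smul_right, inner_smul_right,
      inner_smul_right, real_inner_self_eq_norm_sq, o.areaForm_swap z x]
    linear_combination -o.inner_mul_areaForm_sub x y z
  have harea : ω x v = 0 := by
    rw [hv, map_add, map_add, map_smul, map_smul, map_smul, o.areaForm_apply_self,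
      o.areaForm_swap z x]
    simp only [smul_eq_mul]
    ring
  have hnorm := o.inner_sq_add_areaForm_sq x v
  rw [hinner, harea] at hnorm
  have hxv : ‖x‖ ^ 2 * ‖v‖ ^ 2 = 0 := by linarith
  simpa [hx] using hxv

variable {o} in
lemma exists_nonneg_smul_add_smul {x y z : E} (hxy : 0 < ω x y) (hxz : 0 ≤ ω x z)
    (hzy : 0 ≤ ω z y) : ∃ α β : ℝ, 0 ≤ α ∧ 0 ≤ β ∧ z = α • x + β • y := by
  refine ⟨ω z y / ω x y, ω x z / ω x y, by positivity, by positivity, ?_⟩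
  have hcycle := areaForm_smul_cyclic o x y z
  rw [o.areaForm_swap y z, o.areaForm_swap z x] at hcycle
  refine smul_right_injective E hxy.ne' ?_
  simp only [smul_add, smul_smul, mul_div_cancel₀ _ hxy.ne']
  linear_combination (norm := module) hcycle

variable {o} in
lemma areaForm_pos_of_smul_eq {v w d : E} {p r s : ℝ} (hp : 0 < p) (hr : 0 < r)
    (hdv : 0 < ω d v) (hw : p • w = s • d + r • v) : 0 < ω d w := by
  refine pos_of_mul_pos_right (a := p) ?_ hp.le
  rw [← smul_eq_mul, ← map_smul, hw, map_add, map_smul, map_smul, o.areaForm_apply_self, smul_zero,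
    zero_add]
  exact mul_pos hr hdv

variable {o} in
lemma pos_iff_of_areaForm_pos {x y z : E} (hxy : 0 < ω x y) (hyz : 0 < ω y z) (φ : E →ₗ[ℝ] ℝ)
    (hx : 0 < φ x) (hz : 0 < φ z) : 0 < φ y ↔ 0 < ω x z := by
  have hφ := congrArg φ (areaForm_smul_cyclic o x y z)
  rw [o.areaForm_swap z x] at hφ
  simp only [map_add, map_smul, smul_eq_mul, map_zero] at hφ
  have hprod : 0 < ω x z * φ y := by nlinarith [mul_pos hxy hz, mul_pos hyz hx]
  exact (pos_iff_pos_of_mul_pos hprod).symm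

lemma abs_areaForm_le_of_abs_inner_le {n x y : E} {θ : ℝ} (hn : ‖n‖ = 1)
    (hx : |⟪n, x⟫| ≤ ‖x‖ * θ) (hy : |⟪n, y⟫| ≤ ‖y‖ * θ) :
    |ω x y| ≤ 2 * (‖x‖ * ‖y‖ * θ) := by
  have hω (z : E) : |ω n z| ≤ ‖z‖ := by simpa [hn] using o.abs_areaForm_le n z
  have hexpand := o.inner_mul_areaForm_sub n x y
  rw [hn, one_pow, one_mul] at hexpand
  rw [← hexpand]
  calc |⟪n, x⟫ * ω n y - ω n x * ⟪n, y⟫|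
      ≤ |⟪n, x⟫ * ω n y| + |ω n x * ⟪n, y⟫| := abs_sub _ _
    _ = |⟪n, x⟫| * |ω n y| + |ω n x| * |⟪n, y⟫| := by rw [abs_mul, abs_mul]
    _ ≤ ‖x‖ * θ * ‖y‖ + ‖x‖ * (‖y‖ * θ) := by
      have hxθ := (abs_nonneg _).trans hx
      gcongr <;> apply hω
    _ = 2 * (‖x‖ * ‖y‖ * θ) := by ring

lemma exists_transversal {A n : E} {κ : ℝ} (hA : A ≠ 0) (hn : ‖n‖ = 1)
    (hκ : κ * ‖A‖ ≤ ⟪n, A⟫) :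
    ∃ u : E, ‖u‖ ≤ 2 ∧ ∀ w, 0 ≤ ω A w → ⟪n, w⟫ ≤ 0 → κ * ‖w‖ ≤ ⟪u, w⟫ := by
  set J := o.rightAngleRotation
  have hA' : 0 < ‖A‖ := norm_pos_iff.2 hA
  set e := ‖A‖⁻¹ • A with he
  have he1 : ‖e‖ = 1 := by rw [he, norm_smul, norm_inv, norm_norm, inv_mul_cancel₀ hA'.ne']
  refine ⟨J e - n, (norm_sub_le _ _).trans ?_, fun w hAw hnw => ?_⟩
  · rw [LinearIsometryEquiv.norm_map, he1, hn]; norm_num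
  have hne : κ ≤ ⟪n, e⟫ := by
    rw [he, inner_smul_right, inv_mul_eq_div, le_div_iff₀ hA']
    exact hκ
  have hew : 0 ≤ ω e w := by
    rw [he, map_smul, LinearMap.smul_apply, smul_eq_mul]
    positivity
  have hdecomp : ⟪n, e⟫ • w = ω e w • J n + ⟪n, w⟫ • e := by
    have h := areaForm_smul_cyclic o e w (J n)
    rw [o.areaForm_rightAngleRotation_right, o.areaForm_rightAngleRotation_left,
      real_inner_comm] at h
    linear_combination (norm := module) -h
  have hJ : ‖J n‖ = 1 := by rw [LinearIsometryEquiv.norm_map, hn]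
  calc κ * ‖w‖ ≤ ⟪n, e⟫ * ‖w‖ := by gcongr
    _ ≤ ‖⟪n, e⟫ • w‖ := by rw [norm_smul]; gcongr; exact Real.le_norm_self _
    _ ≤ ω e w - ⟪n, w⟫ := by
      rw [hdecomp]
      refine (norm_add_le _ _).trans_eq ?_
      rw [norm_smul, norm_smul, hJ, he1, Real.norm_of_nonneg hew, Real.norm_of_nonpos hnw]
      ring
    _ = ⟪J e - n, w⟫ := by rw [inner_sub_left, o.inner_rightAngleRotation_left]

end AreaForm

section Visibility

lemma add_lt_one_of_disjoint_segment {V : Type*} [AddCommGroup V] [Module ℝ V] {K : Set V}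
    (hK : Convex ℝ K) {A P X Y : V} (hX : X ∈ K) (hY : Y ∈ K) (hP : Disjoint (segment ℝ A P) K)
    {s t : ℝ} (hs : 0 ≤ s) (ht : 0 ≤ t) (hPXY : P - A = s • (X - A) + t • (Y - A)) :
    s + t < 1 := by
  by_contra! hst
  have hpos : 0 < s + t := one_pos.trans_le hst
  have hmem : (s / (s + t)) • X + (t / (s + t)) • Y ∈ segment ℝ A P := by
    rw [segment_eq_image']
    refine ⟨(s + t)⁻¹, ⟨by positivity, inv_le_one_of_one_le₀ hst⟩, ?_⟩
    have hone : (s / (s + t) + t / (s + t)) • A = A := by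
      rw [← add_div, div_self hpos.ne', one_smul]
    dsimp only
    rw [hPXY]
    linear_combination (norm := module) -hone
  exact Set.disjoint_left.1 hP hmem (hK hX hY (by positivity) (by positivity) (by field_simp))

variable {E : Type*} [NormedAddCommGroup E] [InnerProductSpace ℝ E]
  [Fact (Module.finrank ℝ E = 2)] {o : Orientation ℝ E (Fin 2)} {K : Set E} {A P Q X Y c : E}

local notation "ω" => o.areaForm

lemma exists_add_lt_one_of_disjoint_segment (hK : Convex ℝ K) (hX : X ∈ K) (hY : Y ∈ K)
    (hP : Disjoint (segment ℝ A P) K) (hXY : 0 < ω (X - A) (Y - A))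
    (hXP : 0 ≤ ω (X - A) (P - A)) (hPY : 0 ≤ ω (P - A) (Y - A)) :
    ∃ s t : ℝ, 0 ≤ s ∧ 0 ≤ t ∧ s + t < 1 ∧ P - A = s • (X - A) + t • (Y - A) := by
  obtain ⟨s, t, hs, ht, hPst⟩ := exists_nonneg_smul_add_smul hXY hXP hPY
  exact ⟨s, t, hs, ht, add_lt_one_of_disjoint_segment hK hX hY hP hs ht hPst, hPst⟩

lemma exists_eq_smul_add_smul_of_disjoint_segment (hK : Convex ℝ K) (h0 : 0 ∈ K) (hc : c ∈ K)
    (hP : Disjoint (segment ℝ A P) K) (hAc : 0 < ω A c) (hAP : 0 ≤ ω A P)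
    (hcP : 0 ≤ ω (c - A) (P - A)) :
    ∃ α β : ℝ, 0 < α ∧ 0 ≤ β ∧ α + β ≤ 1 ∧ P = α • A + β • c := by
  have hω (x : E) : ω (x - A) (0 - A) = ω A x := by
    rw [zero_sub, map_neg, map_sub, LinearMap.sub_apply, o.areaForm_apply_self,
      o.areaForm_swap x A, sub_zero, neg_neg]
  obtain ⟨s, t, hs, ht, hst, hPst⟩ := exists_add_lt_one_of_disjoint_segment hK hc h0 hP
    (by rwa [hω]) hcP (by rwa [hω])
  refine ⟨1 - s - t, s, by linarith, hs, by linarith, ?_⟩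
  linear_combination (norm := module) hPst

lemma not_disjoint_openSegment_of_mem_triangle (hK : Convex ℝ K) (h0 : 0 ∈ K) {k : E} (hk : k ∈ K)
    (hP : Disjoint (segment ℝ A P) K) (hAP : 0 ≤ ω A P) (hAQ : 0 < ω A Q)
    (hPQ : 0 < ω (Q - A) (P - A)) {s t : ℝ} (hs : 0 < s) (ht : 0 < t) (hst : s + t ≤ 1)
    (hkst : k = A + (s • (P - A) + t • (Q - A))) :
    ¬Disjoint (openSegment ℝ P Q) K := by
  have hAk : 0 < ω A k := by
    have : ω A k = s * ω A P + t * ω A Q := by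
      simp [hkst, o.areaForm_apply_self]
    rw [this]
    positivity
  have hkP : 0 ≤ ω (k - A) (P - A) := by
    have : ω (k - A) (P - A) = t * ω (Q - A) (P - A) := by
      rw [hkst, add_sub_cancel_left, map_add, LinearMap.add_apply, map_smul, map_smul,
        LinearMap.smul_apply, LinearMap.smul_apply, o.areaForm_apply_self]
      simp
    rw [this]
    positivity
  obtain ⟨α, β, hα, hβ, hαβ, hPk⟩ :=
    exists_eq_smul_add_smul_of_disjoint_segment hK h0 hk hP hAk hAP hkP
  have hd : 0 < 1 - (s + t) + α * (s + t) := by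
    have := mul_pos hα (add_pos hs ht)
    linarith
  -- Eliminating `A` between `P = α A + β k` and `k = A + s (P - A) + t (Q - A)` exhibits a point
  -- of `(P, Q)` on the segment `[0, k]`.
  have hmem : (((1 - (s + t)) * β + α) / (1 - (s + t) + α * (s + t))) • k ∈ K := by
    refine hK.smul_mem_of_zero_mem h0 hk ⟨?_, ?_⟩
    · exact div_nonneg (add_nonneg (mul_nonneg (by linarith) hβ) hα.le) hd.le
    · rw [div_le_one hd]
      nlinarith
  refine Set.not_disjoint_iff.2 ⟨_, ⟨(1 - (s + t) + α * s) / (1 - (s + t) + α * (s + t)),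
    α * t / (1 - (s + t) + α * (s + t)), ?_, by positivity, ?_, ?_⟩, hmem⟩
  · exact div_pos (add_pos_of_nonneg_of_pos (by linarith) (by positivity)) hd
  · rw [← add_div, div_eq_one_iff_eq hd.ne']
    ring
  · refine smul_right_injective E hd.ne' ?_
    simp only [smul_add, smul_smul, mul_div_cancel₀ _ hd.ne']
    linear_combination (norm := module) (1 - (s + t)) • hPk - α • hkst

end Visibility

section Gauge

lemma mem_convexHull_zero_pair {V : Type*} [AddCommGroup V] [Module ℝ V] {A B P : V} :
    P ∈ convexHull ℝ {0, A, B} ↔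
      ∃ s t : ℝ, 0 ≤ s ∧ 0 ≤ t ∧ s + t ≤ 1 ∧ P = s • A + t • B := by
  simp only [convexHull_insert (insert_nonempty A {B}), convexHull_pair, convexJoin_singleton_left,
    mem_iUnion, exists_prop]
  constructor
  · rintro ⟨_, ⟨u, v, hu, hv, huv, rfl⟩, p, q, hp, hq, hpq, rfl⟩
    refine ⟨q * u, q * v, by positivity, by positivity, ?_, by module⟩
    rw [← mul_add, huv]
    linarith
  · rintro ⟨s, t, hs, ht, hst, rfl⟩
    rcases (add_nonneg hs ht).eq_or_lt with h | h
    · obtain ⟨rfl, rfl⟩ := (add_eq_zero_iff_of_nonneg hs ht).1 h.symm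
      exact ⟨A, left_mem_segment ℝ A B, by simp [left_mem_segment]⟩
    · refine ⟨(s / (s + t)) • A + (t / (s + t)) • B, ⟨_, _, by positivity, by positivity,
        by rw [← add_div, div_self h.ne'], rfl⟩, 1 - (s + t), s + t, by linarith, h.le, by ring, ?_⟩
      rw [smul_zero, zero_add, smul_add, smul_smul, smul_smul, mul_div_cancel₀ _ h.ne',
        mul_div_cancel₀ _ h.ne']

lemma norm_sub_le_angle {V : Type*} [NormedAddCommGroup V] [InnerProductSpace ℝ V] {x y : V}
    (hx : ‖x‖ = 1) (hy : ‖y‖ = 1) : ‖x - y‖ ≤ InnerProductGeometry.angle x y := by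
  refine (sq_le_sq₀ (norm_nonneg _) (InnerProductGeometry.angle_nonneg x y)).1 ?_
  have hcos := Real.one_sub_sq_div_two_le_cos (x := InnerProductGeometry.angle x y)
  rw [InnerProductGeometry.cos_angle, hx, hy, mul_one, div_one] at hcos
  rw [norm_sub_sq_real, hx, hy]
  linarith

variable {E : Type*} [NormedAddCommGroup E] [InnerProductSpace ℝ E]
  {ρ : E → ℝ} {m M a W : ℝ} {A B P c n n' : E}

/-- A positively homogeneous subadditive function `ρ` with `m ‖x‖ ≤ ρ x ≤ M ‖x‖`, that is, a norm
that need not be symmetric, with explicit comparison constants. -/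
structure IsGauge (ρ : E → ℝ) (m M : ℝ) : Prop where
  pos : 0 < m
  add_le : ∀ x y, ρ (x + y) ≤ ρ x + ρ y
  smul_of_nonneg : ∀ t : ℝ, 0 ≤ t → ∀ x, ρ (t • x) = t * ρ x
  mul_norm_le : ∀ x, m * ‖x‖ ≤ ρ x
  le_mul_norm : ∀ x, ρ x ≤ M * ‖x‖

namespace IsGauge

lemma nonneg (hρ : IsGauge ρ m M) (x : E) : 0 ≤ ρ x :=
  (mul_nonneg hρ.pos.le (norm_nonneg x)).trans (hρ.mul_norm_le x)

lemma map_zero (hρ : IsGauge ρ m M) : ρ 0 = 0 := by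
  simpa using hρ.smul_of_nonneg 0 le_rfl 0

lemma map_pos (hρ : IsGauge ρ m M) {x : E} (hx : x ≠ 0) : 0 < ρ x :=
  (mul_pos hρ.pos (norm_pos_iff.2 hx)).trans_le (hρ.mul_norm_le x)

lemma le_const (hρ : IsGauge ρ m M) {x : E} (hx : x ≠ 0) : m ≤ M :=
  le_of_mul_le_mul_right ((hρ.mul_norm_le x).trans (hρ.le_mul_norm x)) (norm_pos_iff.2 hx)

lemma const_pos (hρ : IsGauge ρ m M) {x : E} (hx : x ≠ 0) : 0 < M :=
  hρ.pos.trans_le (hρ.le_const hx)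

lemma smul_add_smul_le (hρ : IsGauge ρ m M) {s t : ℝ} (hs : 0 ≤ s) (ht : 0 ≤ t) (x y : E) :
    ρ (s • x + t • y) ≤ s * ρ x + t * ρ y :=
  (hρ.add_le _ _).trans_eq (by rw [hρ.smul_of_nonneg s hs, hρ.smul_of_nonneg t ht])

lemma convexOn (hρ : IsGauge ρ m M) : ConvexOn ℝ univ ρ :=
  ⟨convex_univ, fun x _ y _ _ _ hs ht _ => hρ.smul_add_smul_le hs ht x y⟩

lemma convex_lt (hρ : IsGauge ρ m M) (a : ℝ) : Convex ℝ {x | ρ x < a} := by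
  simpa using hρ.convexOn.convex_lt a

lemma norm_sub_le_of_mem_triangle (hρ : IsGauge ρ m M) (hA : ρ A ≤ a + W) (hB : ρ B ≤ a + W)
    (hAB : 1 ≤ dist A B) (hP : P ∈ convexHull ℝ {0, A, B}) (haP : a ≤ ρ P) :
    ‖P - A‖ ≤ (1 + W / m) * dist A B := by
  obtain ⟨s, t, hs, ht, hst, rfl⟩ := mem_convexHull_zero_pair.1 hP
  have hwidth : (1 - s - t) * (a + W) ≤ W := by
    have := hρ.smul_add_smul_le hs ht A B
    nlinarith
  have hAW : (1 - s - t) * ‖A‖ ≤ W / m := by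
    rw [le_div_iff₀ hρ.pos]
    nlinarith [hρ.mul_norm_le A]
  have hW : 0 ≤ W / m := le_trans (mul_nonneg (by linarith) (norm_nonneg A)) hAW
  calc ‖s • A + t • B - A‖ = ‖t • (B - A) - (1 - s - t) • A‖ := by congr 1; module
    _ ≤ t * dist A B + (1 - s - t) * ‖A‖ := by
      refine (norm_sub_le _ _).trans_eq ?_
      rw [norm_smul, norm_smul, Real.norm_of_nonneg ht, Real.norm_of_nonneg (by linarith),
        dist_comm, dist_eq_norm]
    _ ≤ 1 * dist A B + W / m * dist A B :=
      add_le_add (by gcongr; linarith) (hAW.trans (le_mul_of_one_le_right hW hAB))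
    _ = (1 + W / m) * dist A B := by ring

end IsGauge

/-- `n` is an outward unit normal of the convex body `{ρ ≤ 1}` at its boundary point on the ray
through `A`; the supporting inequality is multiplied by `ρ A`, so that no division occurs. -/
structure IsUnitNormal (ρ : E → ℝ) (A n : E) : Prop where
  norm_eq_one : ‖n‖ = 1
  mul_inner_le : ∀ x, ρ A * ⟪n, x⟫ ≤ ⟪n, A⟫ * ρ x

namespace IsUnitNormal

lemma of_forall_inner_nonpos (hρ : IsGauge ρ m M) (hA : A ≠ 0) (hn : ‖n‖ = 1)
    (h : ∀ y, ρ y ≤ 1 → ⟪y - (ρ A)⁻¹ • A, n⟫ ≤ 0) : IsUnitNormal ρ A n := by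
  refine ⟨hn, fun x => ?_⟩
  rcases eq_or_ne x 0 with rfl | hx
  · simp [hρ.map_zero]
  have hρA := hρ.map_pos hA
  have hρx := hρ.map_pos hx
  have hsupp := h ((ρ x)⁻¹ • x)
    (by rw [hρ.smul_of_nonneg _ (by positivity), inv_mul_cancel₀ hρx.ne'])
  rw [inner_sub_left, real_inner_smul_left, real_inner_smul_left, sub_nonpos, inv_mul_eq_div,
    inv_mul_eq_div, div_le_div_iff₀ hρx hρA, real_inner_comm, real_inner_comm n A] at hsupp
  linarith

lemma div_mul_norm_le_inner (hρ : IsGauge ρ m M) (hA : A ≠ 0) (hn : IsUnitNormal ρ A n) :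
    m / M * ‖A‖ ≤ ⟪n, A⟫ := by
  have hself : ρ A ≤ ⟪n, A⟫ * ρ n := by
    simpa [real_inner_self_eq_norm_sq, hn.norm_eq_one] using hn.mul_inner_le n
  have hnM : ρ n ≤ M := by simpa [hn.norm_eq_one] using hρ.le_mul_norm n
  have hnA : 0 ≤ ⟪n, A⟫ := by
    by_contra! hneg
    nlinarith [hρ.map_pos hA, hρ.nonneg n]
  rw [div_mul_eq_mul_div, div_le_iff₀ (hρ.const_pos hA)]
  exact (hρ.mul_norm_le A).trans (hself.trans (by gcongr))

lemma inner_nonneg (hρ : IsGauge ρ m M) (hA : A ≠ 0) (hn : IsUnitNormal ρ A n) : 0 ≤ ⟪n, A⟫ :=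
  (mul_nonneg (div_pos hρ.pos (hρ.const_pos hA)).le (norm_nonneg A)).trans
    (hn.div_mul_norm_le_inner hρ hA)

lemma inner_le_of_map_le (hρ : IsGauge ρ m M) (hA : A ≠ 0) (hn : IsUnitNormal ρ A n)
    (hP : ρ P ≤ ρ A) : ⟪n, P⟫ ≤ ⟪n, A⟫ := by
  have hnA := hn.inner_nonneg hρ hA
  refine le_of_mul_le_mul_left ((hn.mul_inner_le P).trans ?_) (hρ.map_pos hA)
  rw [mul_comm]
  gcongr

lemma inner_le_inner_smul_add_smul (hρ : IsGauge ρ m M) (hA : A ≠ 0) (hn : IsUnitNormal ρ A n)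
    {α β : ℝ} (hα : 0 ≤ α) (hβ : 0 ≤ β) (hc : ρ c ≤ ρ (α • A + β • c))
    (hβc : β ≤ 1 ∨ 0 ≤ ⟪n, c⟫) : ⟪n, c⟫ ≤ ⟪n, α • A + β • c⟫ := by
  have hnA := hn.inner_nonneg hρ hA
  rw [inner_add_right, inner_smul_right, inner_smul_right]
  rcases le_total β 1 with hβ1 | hβ1
  · have hscale : (1 - β) * ρ c ≤ α * ρ A := by
      linarith [hρ.smul_add_smul_le hα hβ A c]
    have := mul_le_mul_of_nonneg_left (hn.mul_inner_le c) (sub_nonneg.2 hβ1)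
    have := mul_le_mul_of_nonneg_left hscale hnA
    have : (1 - β) * ⟪n, c⟫ ≤ α * ⟪n, A⟫ :=
      le_of_mul_le_mul_left (by linarith) (hρ.map_pos hA)
    linarith
  · have hnc : (1 - β) * ⟪n, c⟫ ≤ 0 := by
      rcases hβc with h | h
      · rw [le_antisymm h hβ1, sub_self, zero_mul]
      · exact mul_nonpos_of_nonpos_of_nonneg (sub_nonpos.2 hβ1) h
    linarith [mul_nonneg hα hnA]

lemma div_le_angle_of_inner_neg (hρ : IsGauge ρ m M) (hA : A ≠ 0) (hn : IsUnitNormal ρ A n)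
    (hn' : ‖n'‖ = 1) (hneg : ⟪n', A⟫ < 0) : m / M ≤ InnerProductGeometry.angle n n' := by
  refine le_of_mul_le_mul_right ?_ (norm_pos_iff.2 hA)
  calc m / M * ‖A‖ ≤ ⟪n, A⟫ := hn.div_mul_norm_le_inner hρ hA
    _ ≤ ⟪n - n', A⟫ := by rw [inner_sub_left]; linarith
    _ ≤ ‖n - n'‖ * ‖A‖ := real_inner_le_norm _ _
    _ ≤ InnerProductGeometry.angle n n' * ‖A‖ := by
      gcongr
      exact norm_sub_le_angle hn.norm_eq_one hn'

end IsUnitNormal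

end Gauge

section Segments

variable {V : Type*} [AddCommGroup V] [Module ℝ V] {A P Q c : V}

lemma pos_sub_of_mem_openSegment (φ : V →ₗ[ℝ] ℝ) (hc : c ∈ openSegment ℝ P Q)
    (hP : 0 < φ (P - A)) (hQ : 0 ≤ φ (Q - A)) : 0 < φ (c - A) := by
  obtain ⟨p, q, hp, hq, hpq, rfl⟩ := hc
  have hsub : p • P + q • Q - A = p • (P - A) + q • (Q - A) := by
    rw [← eq_sub_iff_add_eq'] at hpq
    subst hpq
    module
  rw [hsub, map_add, map_smul, map_smul, smul_eq_mul, smul_eq_mul]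
  positivity

lemma nonneg_sub_of_mem_segment (φ : V →ₗ[ℝ] ℝ) (hc : c ∈ segment ℝ P Q)
    (hP : 0 ≤ φ (P - A)) (hQ : 0 ≤ φ (Q - A)) : 0 ≤ φ (c - A) := by
  rw [map_sub, sub_nonneg] at *
  exact (convex_halfSpace_ge φ.isLinear _).segment_subset hP hQ hc

lemma exists_smul_eq_sub_of_mem_openSegment (hc : c ∈ openSegment ℝ P Q) :
    ∃ l : ℝ, 0 < l ∧ l < 1 ∧ c - P = l • (Q - P) ∧ Q - c = (1 - l) • (Q - P) := by
  obtain ⟨p, q, hp, hq, hpq, rfl⟩ := hc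
  obtain rfl : p = 1 - q := by linarith
  exact ⟨q, hq, by linarith, by module, by module⟩

lemma add_smul_sub_add_smul_sub_mem {T : Set V} (hT : Convex ℝ T) (hA : A ∈ T) (hP : P ∈ T)
    (hQ : Q ∈ T) {s t : ℝ} (hs : 0 ≤ s) (ht : 0 ≤ t) (hst : s + t ≤ 1) :
    A + (s • (P - A) + t • (Q - A)) ∈ T := by
  have hmem := hT.sum_mem (t := Finset.univ) (w := ![1 - s - t, s, t]) (z := ![A, P, Q])
    (by simpa [Fin.forall_fin_succ, hs, ht] using le_sub_iff_add_le'.2 hst)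
    (by simp [Fin.sum_univ_three, sub_sub, add_assoc]) (by simp [Fin.forall_fin_succ, hA, hP, hQ])
  convert hmem using 1
  simp only [Fin.sum_univ_three, Matrix.cons_val_zero, Matrix.cons_val_one, Matrix.cons_val]
  module

end Segments

section ClockwiseOrder

variable {E : Type*} [NormedAddCommGroup E] [InnerProductSpace ℝ E]
  [Fact (Module.finrank ℝ E = 2)] {o : Orientation ℝ E (Fin 2)} {A : E} {P : ℕ → E}
  {N i j k : ℕ} {c c' : E}

local notation "ω" => o.areaForm

/-- The points `P 0, …, P (N - 1)` lie in a half-plane through `A` and are listed clockwise as seen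
from `A`. -/
def IsClockwise (o : Orientation ℝ E (Fin 2)) (A : E) (N : ℕ) (P : ℕ → E) : Prop :=
  ∀ i j, i < j → j < N → 0 < o.areaForm (P j - A) (P i - A)

namespace IsClockwise

lemma areaForm_nonneg (hP : IsClockwise o A N P) (hij : i ≤ j) (hj : j < N) :
    0 ≤ ω (P j - A) (P i - A) := by
  rcases hij.lt_or_eq with h | rfl
  · exact (hP i j h hj).le
  · exact (o.areaForm_apply_self _).ge

lemma areaForm_nonneg_of_mem_openSegment (hP : IsClockwise o A N P) (hik : i < k) (hk : k < N)
    (hc : c ∈ openSegment ℝ (P i) (P (i + 1))) : 0 ≤ ω (P k - A) (c - A) :=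
  nonneg_sub_of_mem_segment (ω (P k - A)) (openSegment_subset_segment ℝ _ _ hc)
    (hP.areaForm_nonneg hik.le hk) (hP.areaForm_nonneg hik hk)

lemma areaForm_nonneg_of_mem_openSegment' (hP : IsClockwise o A N P) (hkj : k ≤ j) (hj : j + 1 < N)
    (hc : c ∈ openSegment ℝ (P j) (P (j + 1))) : 0 ≤ ω (c - A) (P k - A) :=
  nonneg_sub_of_mem_segment (LinearMap.flip ω (P k - A)) (openSegment_subset_segment ℝ _ _ hc)
    (hP.areaForm_nonneg hkj (by omega)) (hP.areaForm_nonneg (by omega) hj)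

lemma areaForm_pos_of_mem_openSegment (hP : IsClockwise o A N P) (hij : i < j) (hj : j + 1 < N)
    (hc : c ∈ openSegment ℝ (P i) (P (i + 1))) (hc' : c' ∈ openSegment ℝ (P j) (P (j + 1))) :
    0 < ω (c' - A) (c - A) :=
  pos_sub_of_mem_openSegment (LinearMap.flip ω (c - A)) hc'
    (pos_sub_of_mem_openSegment (ω (P j - A)) hc (hP i j hij (by omega))
      (hP.areaForm_nonneg hij (by omega)))
    (hP.areaForm_nonneg_of_mem_openSegment (by omega) hj hc)

end IsClockwise

end ClockwiseOrder

section Area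

variable {E : Type*} [NormedAddCommGroup E] [InnerProductSpace ℝ E]

/-- A parallelogram in the interior of the triangle with vertices `A`, `A + v`, `A + w`, with a
quarter of its side lengths. -/
def innerParallelogram (A v w : E) : Set E :=
  (A + (1 / 8 : ℝ) • (v + w)) +ᵥ parallelepiped ![(1 / 4 : ℝ) • v, (1 / 4 : ℝ) • w]

lemma exists_eq_add_of_mem_innerParallelogram {A v w x : E} (hx : x ∈ innerParallelogram A v w) :
    ∃ s t : ℝ, 0 < s ∧ 0 < t ∧ s + t ≤ 1 ∧ x = A + (s • v + t • w) := by
  obtain ⟨_, ⟨r, hr, rfl⟩, rfl⟩ := Set.mem_vadd_set.1 hx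
  have h0 := hr.1 0
  have h1 := hr.1 1
  have h0' := hr.2 0
  have h1' := hr.2 1
  simp only [Pi.zero_apply, Pi.one_apply] at h0 h1 h0' h1'
  refine ⟨1 / 8 + r 0 / 4, 1 / 8 + r 1 / 4, by linarith, by linarith, by linarith, ?_⟩
  simp only [Fin.sum_univ_two, Matrix.cons_val_zero, Matrix.cons_val_one, vadd_eq_add]
  module

lemma measurableSet_innerParallelogram [MeasurableSpace E] [BorelSpace E] (A v w : E) :
    MeasurableSet (innerParallelogram A v w) := by
  refine MeasurableSet.const_vadd (IsCompact.measurableSet ?_) _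
  exact isCompact_Icc.image (by fun_prop)

variable [Fact (Module.finrank ℝ E = 2)] {o : Orientation ℝ E (Fin 2)} {A : E} {P : ℕ → E} {N : ℕ}

local notation "ω" => o.areaForm

lemma disjoint_innerParallelogram (hP : IsClockwise o A N P) {i j : ℕ} (hij : i < j)
    (hj : j + 1 < N) :
    Disjoint (innerParallelogram A (P i - A) (P (i + 1) - A))
      (innerParallelogram A (P j - A) (P (j + 1) - A)) := by
  refine Set.disjoint_left.2 fun x hxi hxj => ?_
  obtain ⟨s, t, hs, ht, -, hx⟩ := exists_eq_add_of_mem_innerParallelogram hxi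
  obtain ⟨s', t', hs', ht', -, hx'⟩ := exists_eq_add_of_mem_innerParallelogram hxj
  have hP' := hP.areaForm_nonneg (Nat.succ_le_of_lt hij) (by omega)
  have h00 := hP i j hij (by omega)
  have h01 := hP i (j + 1) (by omega) hj
  have h11 := hP (i + 1) (j + 1) (by omega) hj
  have hzero : 0 = s' * s * ω (P j - A) (P i - A) + s' * t * ω (P j - A) (P (i + 1) - A) +
      t' * s * ω (P (j + 1) - A) (P i - A) + t' * t * ω (P (j + 1) - A) (P (i + 1) - A) := by
    rw [← o.areaForm_apply_self (x - A)]
    nth_rewrite 1 [hx']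
    rw [hx, add_sub_cancel_left, add_sub_cancel_left]
    simp only [map_add, map_smul, LinearMap.add_apply, LinearMap.smul_apply, smul_eq_mul]
    ring
  have : 0 < s' * s * ω (P j - A) (P i - A) + s' * t * ω (P j - A) (P (i + 1) - A) +
      t' * s * ω (P (j + 1) - A) (P i - A) + t' * t * ω (P (j + 1) - A) (P (i + 1) - A) := by
    positivity
  exact hzero.not_lt this

attribute [local instance] FiniteDimensional.of_fact_finrank_eq_two

variable [MeasurableSpace E] [BorelSpace E]

variable (o) in
lemma volume_innerParallelogram (A v w : E) :
    volume (innerParallelogram A v w) = ENNReal.ofReal (|ω v w| / 16) := by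
  rw [innerParallelogram, measure_vadd, ← o.measure_eq_volume,
    AlternatingMap.measure_parallelepiped, ← o.areaForm_to_volumeForm]
  congr 1
  simp only [map_smul, LinearMap.smul_apply, smul_eq_mul]
  rw [← mul_assoc, abs_mul]
  norm_num
  ring

lemma card_le_sixteen_mul_volume {U : Set E} (hU : volume U ≠ ⊤)
    (hP : IsClockwise o A N P) {Z : Finset ℕ}
    (hZ : ∀ i ∈ Z, i + 1 < N) (hone : ∀ i ∈ Z, 1 ≤ |ω (P i - A) (P (i + 1) - A)|)
    (hsub : ∀ i ∈ Z, ∀ s t : ℝ, 0 < s → 0 < t → s + t ≤ 1 →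
      A + (s • (P i - A) + t • (P (i + 1) - A)) ∈ U) :
    (Z.card : ℝ) ≤ 16 * (volume U).toReal := by
  set D : ℕ → Set E := fun i => innerParallelogram A (P i - A) (P (i + 1) - A)
  have hdisj : (Z : Set ℕ).PairwiseDisjoint D := fun i hi j hj hij =>
    hij.lt_or_gt.elim (fun h => disjoint_innerParallelogram hP h (hZ j hj))
      fun h => (disjoint_innerParallelogram hP h (hZ i hi)).symm
  have hDU : ⋃ i ∈ Z, D i ⊆ U := Set.iUnion₂_subset fun i hi x hx => by
    obtain ⟨s, t, hs, ht, hst, rfl⟩ := exists_eq_add_of_mem_innerParallelogram hx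
    exact hsub i hi s t hs ht hst
  have hcard : (Z.card : ℝ≥0∞) * ENNReal.ofReal (1 / 16) ≤ volume U :=
    calc (Z.card : ℝ≥0∞) * ENNReal.ofReal (1 / 16) = ∑ i ∈ Z, ENNReal.ofReal (1 / 16) := by simp
      _ ≤ ∑ i ∈ Z, volume (D i) := Finset.sum_le_sum fun i hi => by
        rw [volume_innerParallelogram o]
        exact ENNReal.ofReal_le_ofReal (div_le_div_of_nonneg_right (hone i hi) (by norm_num))
      _ = volume (⋃ i ∈ Z, D i) :=
        (measure_biUnion_finset hdisj fun i _ => measurableSet_innerParallelogram _ _ _).symm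
      _ ≤ volume U := measure_mono hDU
  have := ENNReal.toReal_mono hU hcard
  rw [ENNReal.toReal_mul, ENNReal.toReal_natCast, ENNReal.toReal_ofReal (by norm_num)] at this
  linarith

end Area

section Counting

lemma card_le_of_pairwise_le_abs_sub {ι : Type*} {F : Finset ι} {s : ι → ℝ} {δ T : ℝ} (hδ : 0 < δ)
    (hT : 0 ≤ T) (hsep : (F : Set ι).Pairwise fun i j => δ ≤ |s i - s j|)
    (hrange : (F : Set ι).Pairwise fun i j => |s i - s j| ≤ T) : (F.card : ℝ) ≤ T / δ + 1 := by
  rcases F.eq_empty_or_nonempty with rfl | hF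
  · rw [Finset.card_empty, Nat.cast_zero]
    positivity
  obtain ⟨k, hk, hmin⟩ := F.exists_min_image s hF
  have hmaps : ∀ i ∈ F, ⌊(s i - s k) / δ⌋ ∈ Finset.Icc 0 ⌊T / δ⌋ := fun i hi => by
    have hik : s i - s k ≤ T := by
      rcases eq_or_ne i k with rfl | hne
      · simpa using hT
      · exact (le_abs_self _).trans (hrange hi hk hne)
    exact Finset.mem_Icc.2 ⟨Int.floor_nonneg.2 (div_nonneg (sub_nonneg.2 (hmin i hi)) hδ.le),
      Int.floor_le_floor (div_le_div_of_nonneg_right hik hδ.le)⟩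
  have hinj : (F : Set ι).InjOn fun i => ⌊(s i - s k) / δ⌋ := fun i hi j hj hij => by
    by_contra hne
    have hlt := Int.abs_sub_lt_one_of_floor_eq_floor hij
    rw [← sub_div, sub_sub_sub_cancel_right, abs_div, abs_of_pos hδ, div_lt_one hδ] at hlt
    exact hlt.not_ge (hsep hi hj hne)
  have hcard := Finset.card_le_card_of_injOn _ hmaps hinj
  rw [Int.card_Icc, sub_zero, ← Int.ofNat_le, Int.toNat_of_nonneg
    (by have : 0 ≤ ⌊T / δ⌋ := Int.floor_nonneg.2 (by positivity)
        omega)] at hcard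
  calc (F.card : ℝ) ≤ ((⌊T / δ⌋ + 1 : ℤ) : ℝ) := by exact_mod_cast hcard
    _ ≤ T / δ + 1 := by
      push_cast
      gcongr
      exact Int.floor_le _

lemma card_le_two_mul_card_filter_mul_card_le {ι : Type*} {F : Finset ι} {ℓ : ι → ℝ} {Λ : ℝ}
    (hℓ : ∀ i ∈ F, 0 < ℓ i) (hsum : ∑ i ∈ F, ℓ i ≤ Λ) :
    F.card ≤ 2 * (F.filter fun i => ℓ i * F.card ≤ 2 * Λ).card := by
  rcases F.eq_empty_or_nonempty with rfl | hF
  · simp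
  have hΛ : 0 < Λ := (Finset.sum_pos hℓ hF).trans_le hsum
  set G := F.filter fun i => ¬ℓ i * F.card ≤ 2 * Λ
  have hmarkov : (G.card : ℝ) * (2 * Λ) ≤ F.card * Λ :=
    calc (G.card : ℝ) * (2 * Λ) = ∑ _i ∈ G, 2 * Λ := by simp
      _ ≤ ∑ i ∈ G, ℓ i * F.card :=
        Finset.sum_le_sum fun i hi => (not_le.1 (Finset.mem_filter.1 hi).2).le
      _ ≤ ∑ i ∈ F, ℓ i * F.card := Finset.sum_le_sum_of_subset_of_nonneg (Finset.filter_subset _ _)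
          fun i hi _ => mul_nonneg (hℓ i hi).le (Nat.cast_nonneg _)
      _ ≤ F.card * Λ := by
        rw [← Finset.sum_mul, mul_comm]
        gcongr
  have htwo : 2 * G.card ≤ F.card := by
    have : (2 * G.card : ℝ) ≤ F.card := by nlinarith
    exact_mod_cast this
  have hsplit : (F.filter fun i => ℓ i * F.card ≤ 2 * Λ).card + G.card = F.card :=
    Finset.card_filter_add_card_filter_not _
  omega

lemma card_pow_three_le {ι : Type*} {F : Finset ι} {s ℓ : ι → ℝ} {Λ T : ℝ} (hT : 0 ≤ T)
    (hF : 4 < F.card) (hℓ : ∀ i ∈ F, 0 < ℓ i) (hsum : ∑ i ∈ F, ℓ i ≤ Λ)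
    (hsep : (F : Set ι).Pairwise fun i j => 1 ≤ |s i - s j| * (ℓ i * ℓ j))
    (hrange : (F : Set ι).Pairwise fun i j => |s i - s j| ≤ T) :
    (F.card : ℝ) ^ 3 ≤ 16 * Λ ^ 2 * T := by
  have hn : (4 : ℝ) < F.card := by exact_mod_cast hF
  have hΛ : 0 < Λ := (Finset.sum_pos hℓ (Finset.card_pos.1 (by omega))).trans_le hsum
  set r := 2 * Λ / F.card with hr
  have hr0 : 0 < r := by positivity
  set G := F.filter fun i => ℓ i * F.card ≤ 2 * Λ
  have hmem : ∀ i ∈ G, i ∈ F ∧ ℓ i ≤ r := fun i hi => by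
    rw [hr, le_div_iff₀ (by linarith)]
    exact Finset.mem_filter.1 hi
  have hFG : (F.card : ℝ) ≤ 2 * G.card := by
    exact_mod_cast card_le_two_mul_card_filter_mul_card_le hℓ hsum
  have hGT : (G.card : ℝ) ≤ T / (r ^ 2)⁻¹ + 1 := by
    refine card_le_of_pairwise_le_abs_sub (by positivity) hT (fun i hi j hj hij => ?_)
      fun i hi j hj hij => hrange (hmem i hi).1 (hmem j hj).1 hij
    dsimp only
    rw [inv_le_iff_one_le_mul₀ (by positivity), sq]
    refine (hsep (hmem i hi).1 (hmem j hj).1 hij).trans ?_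
    have := (hℓ j (hmem j hj).1).le
    gcongr
    exacts [(hmem i hi).2, (hmem j hj).2]
  have hquarter : (F.card : ℝ) ≤ 4 * (T * r ^ 2) := by
    rw [div_inv_eq_mul] at hGT
    linarith
  calc (F.card : ℝ) ^ 3 = F.card ^ 2 * F.card := by ring
    _ ≤ F.card ^ 2 * (4 * (T * r ^ 2)) := by gcongr
    _ = 16 * Λ ^ 2 * T := by
      rw [hr]
      field_simp
      ring

lemma card_le_four_add_rpow {E : Type*} [NormedAddCommGroup E] [InnerProductSpace ℝ E]
    [Fact (Module.finrank ℝ E = 2)] (o : Orientation ℝ E (Fin 2)) {ι : Type*} {F : Finset ι}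
    {w : ι → E} {u : E} {κ Λ T : ℝ} (hκ : 0 < κ) (hT : 0 ≤ T)
    (hw : ∀ i ∈ F, w i ≠ 0) (hu : ∀ i ∈ F, κ * ‖w i‖ ≤ ⟪u, w i⟫) (hsum : ∑ i ∈ F, ⟪u, w i⟫ ≤ Λ)
    (hone : (F : Set ι).Pairwise fun i j => 1 ≤ |o.areaForm (w i) (w j)|)
    (hangle : (F : Set ι).Pairwise fun i j => |o.areaForm (w i) (w j)| ≤ T * (‖w i‖ * ‖w j‖)) :
    (F.card : ℝ) ≤ 4 + (16 * Λ ^ 2 * (T / κ ^ 2)) ^ (1 / 3 : ℝ) := by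
  rcases le_or_gt F.card 4 with hF | hF
  · have : (F.card : ℝ) ≤ 4 := by exact_mod_cast hF
    exact this.trans (le_add_of_nonneg_right (by positivity))
  have hpos : ∀ i ∈ F, 0 < ⟪u, w i⟫ := fun i hi =>
    (mul_pos hκ (norm_pos_iff.2 (hw i hi))).trans_le (hu i hi)
  have hslope : ∀ i ∈ F, ∀ j ∈ F,
      |o.areaForm u (w i) / (‖u‖ ^ 2 * ⟪u, w i⟫) - o.areaForm u (w j) / (‖u‖ ^ 2 * ⟪u, w j⟫)| *
        (⟪u, w i⟫ * ⟪u, w j⟫) = |o.areaForm (w i) (w j)| := fun i hi j hj => by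
    have hi0 := hpos i hi
    have hj0 := hpos j hj
    have hu0 : 0 < ‖u‖ := norm_pos_iff.2 fun h => by simp [h] at hi0
    rw [abs_sub_comm, ← abs_of_pos (mul_pos hi0 hj0), ← abs_mul]
    congr 1
    field_simp
    linear_combination o.inner_mul_areaForm_sub u (w i) (w j)
  have hcube := card_pow_three_le (T := T / κ ^ 2) (by positivity) hF hpos hsum
    (fun i hi j hj hij => (hslope i hi j hj).ge.trans' (hone hi hj hij))
    fun i hi j hj hij => by
      refine le_of_mul_le_mul_right ?_ (mul_pos (hpos i hi) (hpos j hj))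
      rw [hslope i hi j hj]
      refine (hangle hi hj hij).trans ?_
      rw [div_mul_eq_mul_div, le_div_iff₀ (by positivity)]
      have := mul_le_mul (hu i hi) (hu j hj) (by positivity) (hpos i hi).le
      nlinarith
  rw [← Real.rpow_natCast, Nat.cast_ofNat] at hcube
  calc (F.card : ℝ) = ((F.card : ℝ) ^ (3 : ℝ)) ^ (1 / 3 : ℝ) := by
        rw [← Real.rpow_mul (Nat.cast_nonneg _)]
        norm_num
    _ ≤ (16 * Λ ^ 2 * (T / κ ^ 2)) ^ (1 / 3 : ℝ) := by gcongr
    _ ≤ _ := le_add_of_nonneg_left (by norm_num)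

lemma exists_monotone_eqOn_mem_Icc {α : Type*} [LinearOrder α] {f : α → ℝ} {s : Set α} {a b : ℝ}
    (hab : a ≤ b) (hf : MonotoneOn f s) (hs : MapsTo f s (Icc a b)) :
    ∃ g : α → ℝ, Monotone g ∧ EqOn f g s ∧ ∀ x, g x ∈ Icc a b := by
  obtain ⟨g, hg, hfg⟩ := hf.exists_monotone_extension
    (bddBelow_Icc.mono hs.image_subset) (bddAbove_Icc.mono hs.image_subset)
  refine ⟨fun x => projIcc a b hab (g x), fun x y hxy => monotone_projIcc hab (hg hxy),
    fun x hx => ?_, fun x => (projIcc a b hab (g x)).2⟩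
  simp only [← hfg hx, projIcc_of_mem hab (hs hx)]

lemma sum_sub_le_of_monotoneOn {f : ℕ → ℝ} {s : Set ℕ} {a b : ℝ} (hab : a ≤ b)
    (hf : MonotoneOn f s) (hs : MapsTo f s (Icc a b)) {F : Finset ℕ}
    (hF : ∀ i ∈ F, i ∈ s ∧ i + 2 ∈ s) : ∑ i ∈ F, (f (i + 2) - f i) ≤ 2 * (b - a) := by
  obtain ⟨g, hg, hfg, hgab⟩ := exists_monotone_eqOn_mem_Icc hab hf hs
  obtain ⟨N, hN⟩ := F.exists_nat_subset_range
  have htelescope : ∀ n, ∑ i ∈ Finset.range n, (g (i + 2) - g i) = g (n + 1) + g n - g 1 - g 0 := by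
    intro n
    induction n with
    | zero => simp
    | succ n ih => rw [Finset.sum_range_succ, ih]; ring
  calc ∑ i ∈ F, (f (i + 2) - f i) = ∑ i ∈ F, (g (i + 2) - g i) :=
        Finset.sum_congr rfl fun i hi => by rw [hfg (hF i hi).1, hfg (hF i hi).2]
    _ ≤ ∑ i ∈ Finset.range N, (g (i + 2) - g i) := Finset.sum_le_sum_of_subset_of_nonneg hN
        fun i _ _ => sub_nonneg.2 (hg (by omega))
    _ ≤ 2 * (b - a) := by
      rw [htelescope]
      linarith [(hgab (N + 1)).2, (hgab N).2, (hgab 1).1, (hgab 0).1]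

lemma le_card_filter_three_consecutive (p : ℕ → Prop) [DecidablePred p] (n : ℕ) :
    n ≤ ((Finset.range n).filter fun i => p i ∧ p (i + 1) ∧ p (i + 2)).card +
      3 * ((Finset.range (n + 2)).filter fun i => ¬p i).card := by
  set F := (Finset.range n).filter fun i => p i ∧ p (i + 1) ∧ p (i + 2)
  set Z := (Finset.range (n + 2)).filter fun i => ¬p i
  have hcover : Finset.range n ⊆ F ∪ (Finset.range 3).biUnion fun k => Z.image (· - k) := by
    intro i hi
    rw [Finset.mem_range] at hi
    by_cases hiF : i ∈ F
    · exact Finset.mem_union_left _ hiF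
    obtain ⟨k, hk, hpk⟩ : ∃ k < 3, ¬p (i + k) := by
      by_contra! hall
      exact hiF (Finset.mem_filter.2
        ⟨Finset.mem_range.2 hi, hall 0 (by omega), hall 1 (by omega), hall 2 (by omega)⟩)
    refine Finset.mem_union_right _ (Finset.mem_biUnion.2
      ⟨k, Finset.mem_range.2 hk, Finset.mem_image.2 ⟨i + k, ?_, Nat.add_sub_cancel i k⟩⟩)
    exact Finset.mem_filter.2 ⟨Finset.mem_range.2 (by omega), hpk⟩
  calc n = (Finset.range n).card := (Finset.card_range n).symm
    _ ≤ F.card + ((Finset.range 3).biUnion fun k => Z.image (· - k)).card :=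
      (Finset.card_le_card hcover).trans (Finset.card_union_le _ _)
    _ ≤ F.card + 3 * Z.card := by
      gcongr
      simpa using Finset.card_biUnion_le_card_mul (Finset.range 3) (fun k => Z.image (· - k)) Z.card
        fun _ _ => Finset.card_image_le

end Counting

section Crossing

variable {E : Type*} [NormedAddCommGroup E] [InnerProductSpace ℝ E]
  [Fact (Module.finrank ℝ E = 2)] {o : Orientation ℝ E (Fin 2)} {K : Set E}
  {A B P Q c n : E}

local notation "ω" => o.areaForm

/-- The step from `P` to `Q`, two points that are visible from `A` past the obstacle `K` and follow
each other clockwise around `A`, meets `K` in its interior point `c`. -/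
structure IsCrossing (o : Orientation ℝ E (Fin 2)) (K : Set E) (A P Q c : E) : Prop where
  mem : c ∈ K
  mem_openSegment : c ∈ openSegment ℝ P Q
  disjoint_left : Disjoint (segment ℝ A P) K
  disjoint_right : Disjoint (segment ℝ A Q) K
  areaForm_left_nonneg : 0 ≤ o.areaForm A P
  areaForm_right_pos : 0 < o.areaForm A Q
  areaForm_pos : 0 < o.areaForm (Q - A) (P - A)

namespace IsCrossing

lemma areaForm_base_pos (h : IsCrossing o K A P Q c) : 0 < ω A c := by
  obtain ⟨p, q, hp, hq, -, rfl⟩ := h.mem_openSegment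
  rw [map_add, map_smul, map_smul, smul_eq_mul, smul_eq_mul]
  exact add_pos_of_nonneg_of_pos (mul_nonneg hp.le h.areaForm_left_nonneg)
    (mul_pos hq h.areaForm_right_pos)

lemma exists_left_eq (h : IsCrossing o K A P Q c) (hK : Convex ℝ K) (h0 : 0 ∈ K) :
    ∃ α β : ℝ, 0 < α ∧ 0 ≤ β ∧ α + β ≤ 1 ∧ P = α • A + β • c := by
  refine exists_eq_smul_add_smul_of_disjoint_segment hK h0 h.mem h.disjoint_left
    h.areaForm_base_pos h.areaForm_left_nonneg ?_
  exact nonneg_sub_of_mem_segment (LinearMap.flip ω (P - A))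
    (openSegment_subset_segment ℝ _ _ h.mem_openSegment) (o.areaForm_apply_self _).ge
    h.areaForm_pos.le

lemma areaForm_step_pos (h : IsCrossing o K A P Q c) (hK : Convex ℝ K) (h0 : 0 ∈ K) :
    0 < ω A (Q - P) := by
  obtain ⟨α, β, hα, -, hαβ, hP⟩ := h.exists_left_eq hK h0
  obtain ⟨l, hl, -, hcP, -⟩ := exists_smul_eq_sub_of_mem_openSegment h.mem_openSegment
  have hprod : l * ω A (Q - P) = (1 - β) * ω A c := by
    rw [← smul_eq_mul, ← map_smul, ← hcP, hP]
    simp only [map_sub, map_add, map_smul, o.areaForm_apply_self, smul_eq_mul]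
    ring
  refine pos_of_mul_pos_right ?_ hl.le
  rw [hprod]
  exact mul_pos (by linarith) h.areaForm_base_pos

lemma step_ne_zero (h : IsCrossing o K A P Q c) (hK : Convex ℝ K) (h0 : 0 ∈ K) : Q - P ≠ 0 := by
  intro hPQ
  simpa [hPQ] using h.areaForm_step_pos hK h0

lemma areaForm_cut_right_pos (h : IsCrossing o K A P Q c) (hK : Convex ℝ K) (h0 : 0 ∈ K) :
    0 < ω c Q := by
  obtain ⟨α, β, hα, hβ, hαβ, hP⟩ := h.exists_left_eq hK h0
  obtain ⟨l, hl, hl1, -, hQc⟩ := exists_smul_eq_sub_of_mem_openSegment h.mem_openSegment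
  have hcP : ω c Q = (1 - l) * ω P Q := by
    have hc : c = Q - (1 - l) • (Q - P) := by rw [← hQc, sub_sub_cancel]
    rw [hc]
    simp only [map_sub, map_smul, LinearMap.sub_apply, LinearMap.smul_apply, o.areaForm_apply_self,
      smul_eq_mul]
    ring
  have hPQ : ω P Q = α * ω A Q + β * ω c Q := by
    nth_rewrite 1 [hP]
    simp only [map_add, map_smul, LinearMap.add_apply, LinearMap.smul_apply, smul_eq_mul]
  have hpos : 0 < (1 - (1 - l) * β) * ω c Q := by
    have : (1 - (1 - l) * β) * ω c Q = (1 - l) * (α * ω A Q) := by rw [hPQ] at hcP; linarith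
    rw [this]
    exact mul_pos (by linarith) (mul_pos hα h.areaForm_right_pos)
  exact pos_of_mul_pos_right hpos (by nlinarith)

section Gauge

variable {ρ : E → ℝ} {m M a : ℝ}

lemma inner_step_nonpos (h : IsCrossing o {x | ρ x < a} A P Q c) (hρ : IsGauge ρ m M) (ha : 0 < a)
    (hA : A ≠ 0) (hn : IsUnitNormal ρ A n) : ⟪n, Q - P⟫ ≤ 0 := by
  obtain ⟨α, β, hα, hβ, hαβ, hP⟩ := h.exists_left_eq (hρ.convex_lt a) (by simpa [hρ.map_zero])
  obtain ⟨l, hl, -, hcP, -⟩ := exists_smul_eq_sub_of_mem_openSegment h.mem_openSegment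
  have haP : a ≤ ρ P := not_lt.1 (Set.disjoint_left.1 h.disjoint_left (right_mem_segment ℝ A P))
  have hnc : ⟪n, c⟫ ≤ ⟪n, P⟫ := by
    rw [hP]
    exact hn.inner_le_inner_smul_add_smul hρ hA hα.le hβ (hP ▸ h.mem.le.trans haP)
      (Or.inl (by linarith))
  refine nonpos_of_mul_nonpos_right ?_ hl
  rw [← inner_smul_right, ← hcP, inner_sub_right]
  linarith

lemma inner_step_nonneg (h : IsCrossing o {x | ρ x < a} A P Q c) (hρ : IsGauge ρ m M) (ha : 0 < a)
    (hB : B ≠ 0) (hn : IsUnitNormal ρ B n) (hcB : 0 < ω c B) (hQB : 0 ≤ ω Q B)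
    (hnc : 0 ≤ ⟪n, c⟫) : 0 ≤ ⟪n, Q - P⟫ := by
  have hcQ := h.areaForm_cut_right_pos (hρ.convex_lt a) (by simpa [hρ.map_zero])
  obtain ⟨α, β, hα, hβ, hQ⟩ := exists_nonneg_smul_add_smul hcB hcQ.le hQB
  rw [add_comm] at hQ
  obtain ⟨l, -, hl1, -, hQc⟩ := exists_smul_eq_sub_of_mem_openSegment h.mem_openSegment
  have haQ : a ≤ ρ Q := not_lt.1 (Set.disjoint_left.1 h.disjoint_right (right_mem_segment ℝ A Q))
  have hle : ⟪n, c⟫ ≤ ⟪n, Q⟫ := by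
    rw [hQ]
    exact hn.inner_le_inner_smul_add_smul hρ hB hβ hα (hQ ▸ h.mem.le.trans haQ) (Or.inr hnc)
  refine nonneg_of_mul_nonneg_right ?_ (sub_pos.2 hl1)
  rw [← inner_smul_right, ← hQc, inner_sub_right]
  linarith

end Gauge

end IsCrossing

end Crossing

section CrossingOrder

variable {E : Type*} [NormedAddCommGroup E] [InnerProductSpace ℝ E]
  [Fact (Module.finrank ℝ E = 2)] {o : Orientation ℝ E (Fin 2)} {K : Set E} {A : E} {P : ℕ → E}
  {N i j : ℕ} {c c' : E}

local notation "ω" => o.areaForm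

namespace IsCrossing

lemma areaForm_chord_pos (hP : IsClockwise o A N P) (hK : Convex ℝ K) (h0 : 0 ∈ K) (hij : i < j)
    (hj : j + 1 < N) (h : IsCrossing o K A (P i) (P (i + 1)) c)
    (h' : IsCrossing o K A (P j) (P (j + 1)) c') :
    0 < ω (P (i + 1) - P i) (c' - c) ∧ 0 < ω (c' - c) (P (j + 1) - P j) ∧ 0 < ω A (c' - c) := by
  have hcc := hP.areaForm_pos_of_mem_openSegment hij hj h.mem_openSegment h'.mem_openSegment
  obtain ⟨s, t, hs, -, hst, hQ⟩ := exists_add_lt_one_of_disjoint_segment hK h'.mem h.mem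
    h.disjoint_right hcc (hP.areaForm_nonneg_of_mem_openSegment' hij hj h'.mem_openSegment)
    (hP.areaForm_nonneg_of_mem_openSegment (lt_add_one i) (by omega) h.mem_openSegment)
  obtain ⟨s', t', -, -, hst', hP'⟩ := exists_add_lt_one_of_disjoint_segment hK h'.mem h.mem
    h'.disjoint_left hcc (hP.areaForm_nonneg_of_mem_openSegment' le_rfl hj h'.mem_openSegment)
    (hP.areaForm_nonneg_of_mem_openSegment hij (by omega) h.mem_openSegment)
  obtain ⟨l, -, hl, -, hw⟩ := exists_smul_eq_sub_of_mem_openSegment h.mem_openSegment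
  obtain ⟨l', hl', -, hw', -⟩ := exists_smul_eq_sub_of_mem_openSegment h'.mem_openSegment
  have hcA : c' - A = (c - A) + (c' - c) := (sub_add_sub_cancel' _ _ _).symm
  have hstep : (1 - l) • (P (i + 1) - P i) = s • (c' - c) - (1 - s - t) • (c - A) := by
    linear_combination (norm := module) hQ - hw
  have hstep' : l' • (P (j + 1) - P j) = (1 - s') • (c' - c) + (1 - s' - t') • (c - A) := by
    linear_combination (norm := module) -hP' - hw'
  rw [hcA, map_add, LinearMap.add_apply, o.areaForm_apply_self, zero_add] at hcc
  refine ⟨?_, areaForm_pos_of_smul_eq hl' (by linarith) hcc hstep', ?_⟩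
  · rw [o.areaForm_swap, ← map_neg]
    exact areaForm_pos_of_smul_eq (v := c - A) (s := -s) (sub_pos.2 hl) (sub_pos.2 hst) hcc
      (by linear_combination (norm := module) -hstep)
  · refine pos_of_mul_pos_right (a := s) ?_ hs
    have hstep_pos := h.areaForm_step_pos hK h0
    have hbase := h.areaForm_base_pos
    have harea := congrArg (ω A) hstep
    simp only [map_sub, map_smul, smul_eq_mul, o.areaForm_apply_self, sub_zero] at harea hstep_pos ⊢
    nlinarith [mul_pos (sub_pos.2 hl) hstep_pos, mul_pos (sub_pos.2 hst) hbase]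

lemma areaForm_step_step_pos (hP : IsClockwise o A N P) (hK : Convex ℝ K) (h0 : 0 ∈ K)
    (hij : i < j) (hj : j + 1 < N) (h : IsCrossing o K A (P i) (P (i + 1)) c)
    (h' : IsCrossing o K A (P j) (P (j + 1)) c') :
    0 < ω (P (i + 1) - P i) (P (j + 1) - P j) := by
  obtain ⟨hwd, hdw, hAd⟩ := areaForm_chord_pos hP hK h0 hij hj h h'
  exact (pos_iff_of_areaForm_pos hwd hdw (ω A) (h.areaForm_step_pos hK h0)
    (h'.areaForm_step_pos hK h0)).1 hAd

lemma pos_chord_of_pos_step (hP : IsClockwise o A N P) (hK : Convex ℝ K) (h0 : 0 ∈ K)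
    (hij : i < j) (hj : j + 1 < N) (h : IsCrossing o K A (P i) (P (i + 1)) c)
    (h' : IsCrossing o K A (P j) (P (j + 1)) c') (φ : E →ₗ[ℝ] ℝ) (hφ : 0 < φ (P (i + 1) - P i))
    (hφ' : 0 < φ (P (j + 1) - P j)) : 0 < φ (c' - c) := by
  obtain ⟨hwd, hdw, -⟩ := areaForm_chord_pos hP hK h0 hij hj h h'
  exact (pos_iff_of_areaForm_pos hwd hdw φ hφ hφ').2 (areaForm_step_step_pos hP hK h0 hij hj h h')

end IsCrossing

end CrossingOrder

section Turning

variable {E : Type*} [NormedAddCommGroup E] [InnerProductSpace ℝ E]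
  [Fact (Module.finrank ℝ E = 2)] {o : Orientation ℝ E (Fin 2)} {ρ : E → ℝ} {m M a : ℝ}
  {A B P Q c P' Q' c' nA nB : E}

local notation "ω" => o.areaForm

local notation "Θ" => InnerProductGeometry.angle

namespace IsCrossing

lemma areaForm_cut_pos {K : Set E} (h : IsCrossing o K A P Q c) (hK : Convex ℝ K) (h0 : 0 ∈ K)
    (hAB : 0 < ω A B) (hQB : 0 ≤ ω Q B) : 0 < ω c B := by
  have hcycle := congrArg (ω A) (areaForm_smul_cyclic o c Q B)
  rw [o.areaForm_swap B c] at hcycle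
  simp only [map_add, map_smul, smul_eq_mul, map_zero] at hcycle
  refine pos_of_mul_pos_left (b := ω A Q) ?_ h.areaForm_right_pos.le
  have := mul_pos (h.areaForm_cut_right_pos hK h0) hAB
  have := mul_nonneg hQB h.areaForm_base_pos.le
  linarith

lemma abs_inner_step_le (h : IsCrossing o {x | ρ x < a} A P Q c) (hρ : IsGauge ρ m M)
    (ha : 0 < a) (hA : A ≠ 0) (hB : B ≠ 0) (hnA : IsUnitNormal ρ A nA)
    (hnB : IsUnitNormal ρ B nB) (hAB : 0 < ω A B) (hQB : 0 ≤ ω Q B) (hnonneg : 0 ≤ ⟪nB, A⟫) :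
    |⟪nA, Q - P⟫| ≤ ‖Q - P‖ * Θ nA nB := by
  have hcB := h.areaForm_cut_pos (hρ.convex_lt a) (by simpa [hρ.map_zero]) hAB hQB
  have hnc : 0 ≤ ⟪nB, c⟫ := by
    obtain ⟨α, β, hα, hβ, hc⟩ := exists_nonneg_smul_add_smul hAB h.areaForm_base_pos.le hcB.le
    rw [hc, inner_add_right, inner_smul_right, inner_smul_right]
    have := hnB.inner_nonneg hρ hB
    positivity
  have hstep := h.inner_step_nonneg hρ ha hB hnB hcB hQB hnc
  rw [abs_of_nonpos (h.inner_step_nonpos hρ ha hA hnA)]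
  calc -⟪nA, Q - P⟫ ≤ ⟪nB - nA, Q - P⟫ := by rw [inner_sub_left]; linarith
    _ ≤ ‖nB - nA‖ * ‖Q - P‖ := real_inner_le_norm _ _
    _ ≤ ‖Q - P‖ * Θ nA nB := by
      rw [mul_comm, norm_sub_rev nB]
      gcongr
      exact norm_sub_le_angle hnA.norm_eq_one hnB.norm_eq_one

lemma abs_areaForm_step_step_le (h : IsCrossing o {x | ρ x < a} A P Q c)
    (h' : IsCrossing o {x | ρ x < a} A P' Q' c') (hρ : IsGauge ρ m M) (ha : 0 < a)
    (hnA : IsUnitNormal ρ A nA) (hnB : IsUnitNormal ρ B nB) (hAB : 0 < ω A B) (hQB : 0 ≤ ω Q B)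
    (hQB' : 0 ≤ ω Q' B) :
    |ω (Q - P) (Q' - P')| ≤ 2 / (m / M) * Θ nA nB * (‖Q - P‖ * ‖Q' - P'‖) := by
  have hA : A ≠ 0 := by rintro rfl; simp at hAB
  have hB : B ≠ 0 := by rintro rfl; simp at hAB
  have hκ : 0 < m / M := div_pos hρ.pos (hρ.const_pos hA)
  have hκ1 : m / M ≤ 1 := (div_le_one (hρ.const_pos hA)).2 (hρ.le_const hA)
  have hΘ := InnerProductGeometry.angle_nonneg nA nB
  rcases le_or_gt 0 ⟪nB, A⟫ with hnonneg | hneg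
  · refine (abs_areaForm_le_of_abs_inner_le o hnA.norm_eq_one
      (h.abs_inner_step_le hρ ha hA hB hnA hnB hAB hQB hnonneg)
      (h'.abs_inner_step_le hρ ha hA hB hnA hnB hAB hQB' hnonneg)).trans ?_
    rw [mul_comm _ (Θ nA nB), ← mul_assoc]
    gcongr
    exact (le_div_iff₀ hκ).2 (by linarith)
  · refine (o.abs_areaForm_le _ _).trans (le_mul_of_one_le_left (by positivity) ?_)
    rw [div_mul_eq_mul_div, le_div_iff₀ hκ]
    linarith [hnA.div_le_angle_of_inner_neg hρ hA hnB.norm_eq_one hneg]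

end IsCrossing

end Turning

section Triangle

variable {E : Type*} [NormedAddCommGroup E] [InnerProductSpace ℝ E]
  [Fact (Module.finrank ℝ E = 2)] {o : Orientation ℝ E (Fin 2)} {A B P Q : E}

local notation "ω" => o.areaForm

lemma areaForm_left_nonneg_of_mem_triangle (hAB : 0 ≤ ω A B) (hP : P ∈ convexHull ℝ {0, A, B}) :
    0 ≤ ω A P := by
  obtain ⟨s, t, -, ht, -, rfl⟩ := mem_convexHull_zero_pair.1 hP
  simp only [map_add, map_smul, o.areaForm_apply_self, smul_eq_mul, mul_zero, zero_add]
  positivity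

lemma areaForm_right_nonneg_of_mem_triangle (hAB : 0 ≤ ω A B) (hP : P ∈ convexHull ℝ {0, A, B}) :
    0 ≤ ω P B := by
  obtain ⟨s, t, hs, -, -, rfl⟩ := mem_convexHull_zero_pair.1 hP
  simp only [map_add, map_smul, LinearMap.add_apply, LinearMap.smul_apply, o.areaForm_apply_self,
    smul_eq_mul, mul_zero, add_zero]
  positivity

lemma areaForm_pos_of_mem_triangle (hAB : 0 < ω A B) (hP : P ∈ convexHull ℝ {0, A, B})
    (hQ : Q ∈ convexHull ℝ {0, A, B}) (hPQ : 0 < ω (Q - A) (P - A)) : 0 < ω A Q := by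
  refine (areaForm_left_nonneg_of_mem_triangle hAB.le hQ).lt_of_ne' fun hAQ => hPQ.not_ge ?_
  have hAP := areaForm_left_nonneg_of_mem_triangle hAB.le hP
  obtain ⟨s, t, -, ht, hst, rfl⟩ := mem_convexHull_zero_pair.1 hQ
  obtain rfl : t = 0 := by simpa [hAB.ne', o.areaForm_apply_self] using hAQ
  have : ω (s • A + (0 : ℝ) • B - A) (P - A) = -((1 - s) * ω A P) := by
    simp only [map_add, map_sub, map_smul, LinearMap.add_apply, LinearMap.sub_apply,
      LinearMap.smul_apply, o.areaForm_apply_self, smul_eq_mul]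
    ring
  rw [this]
  exact neg_nonpos.2 (mul_nonneg (by linarith) hAP)

end Triangle

section VisibleChain

variable {E : Type*} [NormedAddCommGroup E] [InnerProductSpace ℝ E]
  [Fact (Module.finrank ℝ E = 2)] {o : Orientation ℝ E (Fin 2)} {K : Set E} {A B nA nB : E}
  {Λ : AddSubgroup E} {P : ℕ → E} {N i j : ℕ} {ρ : E → ℝ} {m M a W : ℝ}

local notation "ω" => o.areaForm

/-- The area form is integral on the subgroup `Λ`, as it is on a lattice of covolume one. -/
def IsAreaIntegral (o : Orientation ℝ E (Fin 2)) (Λ : AddSubgroup E) : Prop :=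
  ∀ x ∈ Λ, ∀ y ∈ Λ, ∃ k : ℤ, o.areaForm x y = k

lemma IsAreaIntegral.one_le (hΛ : IsAreaIntegral o Λ) {x y : E} (hx : x ∈ Λ) (hy : y ∈ Λ)
    (hxy : 0 < ω x y) : 1 ≤ ω x y := by
  obtain ⟨k, hk⟩ := hΛ x hx y hy
  rw [hk] at hxy ⊢
  exact_mod_cast hxy

lemma IsAreaIntegral.neg (hΛ : IsAreaIntegral o Λ) : IsAreaIntegral (-o) Λ := fun x hx y hy => by
  obtain ⟨k, hk⟩ := hΛ x hx y hy
  exact ⟨-k, by simp [o.areaForm_neg_orientation, hk]⟩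

/-- The points `P 0, …, P (N - 1)` of the subgroup `Λ` lie in the triangle with vertices `0`, `A`,
`B`, are visible from `A` past the obstacle `K`, and are listed clockwise as seen from `A`. -/
structure IsVisibleChain (o : Orientation ℝ E (Fin 2)) (Λ : AddSubgroup E) (K : Set E) (A B : E)
    (N : ℕ) (P : ℕ → E) : Prop where
  isClockwise : IsClockwise o A N P
  mem_lattice : ∀ i < N, P i ∈ Λ
  mem_triangle : ∀ i < N, P i ∈ convexHull ℝ {0, A, B}
  disjoint : ∀ i < N, Disjoint (segment ℝ A (P i)) K

/-- The indices of the steps of `P 0, …, P (N - 1)` that meet the obstacle `K`. -/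
def crossingSteps (K : Set E) (N : ℕ) (P : ℕ → E) : Set ℕ :=
  {i | i + 1 < N ∧ ¬Disjoint (openSegment ℝ (P i) (P (i + 1))) K}

namespace IsVisibleChain

lemma exists_isCrossing (h : IsVisibleChain o Λ K A B N P) (hAB : 0 < ω A B) :
    ∃ c : ℕ → E, ∀ i ∈ crossingSteps K N P, IsCrossing o K A (P i) (P (i + 1)) (c i) := by
  have hcross (i : ℕ) (hi : i ∈ crossingSteps K N P) :
      ∃ c, IsCrossing o K A (P i) (P (i + 1)) c := by
    obtain ⟨hiN, hmeet⟩ := hi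
    obtain ⟨c, hc, hcK⟩ := Set.not_disjoint_iff.1 hmeet
    have hi' : i < N := by omega
    have hpos := h.isClockwise i (i + 1) (by omega) hiN
    exact ⟨c, hcK, hc, h.disjoint i hi', h.disjoint _ hiN,
      areaForm_left_nonneg_of_mem_triangle hAB.le (h.mem_triangle i hi'),
      areaForm_pos_of_mem_triangle hAB (h.mem_triangle i hi') (h.mem_triangle _ hiN) hpos, hpos⟩
  choose! c hc using hcross
  exact ⟨c, hc⟩

attribute [local instance] FiniteDimensional.of_fact_finrank_eq_two

lemma card_le_sixteen_mul_volume [MeasurableSpace E] [BorelSpace E]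
    (h : IsVisibleChain o Λ K A B N P) (hΛ : IsAreaIntegral o Λ) (hA : A ∈ Λ)
    (hK : Convex ℝ K) (h0 : 0 ∈ K) (hAB : 0 < ω A B) {U : Set E} (hU : volume U ≠ ⊤)
    (hKU : convexHull ℝ {0, A, B} \ K ⊆ U) {Z : Finset ℕ} (hZ : ∀ i ∈ Z, i + 1 < N)
    (hcross : ∀ i ∈ Z, i ∉ crossingSteps K N P) : (Z.card : ℝ) ≤ 16 * (volume U).toReal := by
  have hpos (i : ℕ) (hi : i ∈ Z) : 0 < ω (P (i + 1) - A) (P i - A) :=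
    h.isClockwise i (i + 1) (by omega) (hZ i hi)
  have hlt (i : ℕ) (hi : i ∈ Z) : i < N := (Nat.lt_succ_self i).trans (hZ i hi)
  refine _root_.card_le_sixteen_mul_volume hU h.isClockwise hZ (fun i hi => ?_)
    fun i hi s t hs ht hst => hKU ⟨?_, fun hk => ?_⟩
  · rw [o.areaForm_swap, abs_neg]
    exact (hΛ.one_le (Λ.sub_mem (h.mem_lattice _ (hZ i hi)) hA)
      (Λ.sub_mem (h.mem_lattice i (hlt i hi)) hA) (hpos i hi)).trans (le_abs_self _)
  · exact add_smul_sub_add_smul_sub_mem (convex_convexHull ℝ _)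
      (subset_convexHull ℝ _ (by simp)) (h.mem_triangle i (hlt i hi)) (h.mem_triangle _ (hZ i hi))
      hs.le ht.le hst
  · refine hcross i hi ⟨hZ i hi, ?_⟩
    exact not_disjoint_openSegment_of_mem_triangle hK h0 hk (h.disjoint i (hlt i hi))
      (areaForm_left_nonneg_of_mem_triangle hAB.le (h.mem_triangle i (hlt i hi)))
      (areaForm_pos_of_mem_triangle hAB (h.mem_triangle i (hlt i hi)) (h.mem_triangle _ (hZ i hi))
        (hpos i hi)) (hpos i hi) hs ht hst rfl

lemma one_le_abs_areaForm_step_step (h : IsVisibleChain o Λ K A B N P) (hΛ : IsAreaIntegral o Λ)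
    (hK : Convex ℝ K) (h0 : 0 ∈ K) (hAB : 0 < ω A B) (hi : i ∈ crossingSteps K N P)
    (hj : j ∈ crossingSteps K N P) (hij : i ≠ j) :
    1 ≤ |ω (P (i + 1) - P i) (P (j + 1) - P j)| := by
  obtain ⟨c, hc⟩ := h.exists_isCrossing hAB
  have hmem {k : ℕ} (hk : k ∈ crossingSteps K N P) : P (k + 1) - P k ∈ Λ :=
    Λ.sub_mem (h.mem_lattice _ hk.1) (h.mem_lattice k ((Nat.lt_succ_self k).trans hk.1))
  rcases hij.lt_or_gt with hlt | hlt
  · exact (hΛ.one_le (hmem hi) (hmem hj) ((hc i hi).areaForm_step_step_pos h.isClockwise hK h0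
      hlt hj.1 (hc j hj))).trans (le_abs_self _)
  · rw [o.areaForm_swap, abs_neg]
    exact (hΛ.one_le (hmem hj) (hmem hi) ((hc j hj).areaForm_step_step_pos h.isClockwise hK h0
      hlt hi.1 (hc i hi))).trans (le_abs_self _)

lemma sum_step_le (h : IsVisibleChain o Λ K A B N P) (hK : Convex ℝ K) (h0 : 0 ∈ K) {c : ℕ → E}
    (hc : ∀ i ∈ crossingSteps K N P, IsCrossing o K A (P i) (P (i + 1)) (c i)) (φ : E →ₗ[ℝ] ℝ)
    (hφ : ∀ i ∈ crossingSteps K N P, 0 < φ (P (i + 1) - P i)) {b : ℝ} (hb : 0 ≤ b)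
    (hrange : ∀ i ∈ crossingSteps K N P, φ (c i - A) ∈ Icc 0 b) {F : Finset ℕ}
    (hF : ∀ i ∈ F, i ∈ crossingSteps K N P ∧ i + 1 ∈ crossingSteps K N P ∧
      i + 2 ∈ crossingSteps K N P) : ∑ i ∈ F, φ (P (i + 2) - P (i + 1)) ≤ 2 * b := by
  have hmono : StrictMonoOn (fun i => φ (c i - A)) (crossingSteps K N P) := fun i hi j hj hij => by
    have := (hc i hi).pos_chord_of_pos_step h.isClockwise hK h0 hij hj.1 (hc j hj) φ (hφ i hi)
      (hφ j hj)
    simp only [map_sub] at this ⊢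
    linarith
  refine le_trans (Finset.sum_le_sum fun i hi => ?_) ((sum_sub_le_of_monotoneOn hb hmono.monotoneOn
    hrange fun i hi => ⟨(hF i hi).1, (hF i hi).2.2⟩).trans_eq (by rw [sub_zero]))
  obtain ⟨h0, -, h2⟩ := hF i hi
  obtain ⟨l, -, hl, -, hl'⟩ := exists_smul_eq_sub_of_mem_openSegment (hc i h0).mem_openSegment
  obtain ⟨r, hr, -, hr', -⟩ := exists_smul_eq_sub_of_mem_openSegment (hc _ h2).mem_openSegment
  have hchord : c (i + 2) - A - (c i - A) = (1 - l) • (P (i + 1) - P i) + (P (i + 2) - P (i + 1)) +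
      r • (P (i + 2 + 1) - P (i + 2)) := by
    rw [← hl', ← hr']
    module
  rw [← map_sub, hchord, map_add, map_add, map_smul, map_smul, smul_eq_mul, smul_eq_mul]
  linarith [mul_pos (sub_pos.2 hl) (hφ i h0), mul_pos hr (hφ _ h2)]

lemma inner_cut_mem_Icc (h : IsVisibleChain o Λ {x | ρ x < a} A B N P) (hρ : IsGauge ρ m M)
    (hAB : 0 < ω A B) (hAW : ρ A ≤ a + W) (hBW : ρ B ≤ a + W) (hdist : 1 ≤ dist A B)
    (hn : IsUnitNormal ρ A nA) {u : E} (hu : ‖u‖ ≤ 2)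
    (hu' : ∀ w, 0 ≤ ω A w → ⟪nA, w⟫ ≤ 0 → m / M * ‖w‖ ≤ ⟪u, w⟫) {c : E} (hi : i + 1 < N)
    (hc : IsCrossing o {x | ρ x < a} A (P i) (P (i + 1)) c) :
    ⟪u, c - A⟫ ∈ Icc 0 (2 * ((1 + W / m) * dist A B)) := by
  have hA0 : A ≠ 0 := by rintro rfl; simp at hAB
  have hmap (j : ℕ) (hj : j < N) : a ≤ ρ (P j) :=
    not_lt.1 (Set.disjoint_left.1 (h.disjoint j hj) (right_mem_segment ℝ A _))
  have haA : a ≤ ρ A :=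
    not_lt.1 (Set.disjoint_left.1 hc.disjoint_left (left_mem_segment ℝ A _))
  have hball (j : ℕ) (hj : j < N) : P j ∈ Metric.closedBall A ((1 + W / m) * dist A B) := by
    rw [mem_closedBall_iff_norm]
    exact hρ.norm_sub_le_of_mem_triangle hAW hBW hdist (h.mem_triangle j hj) (hmap j hj)
  have hnorm : ‖c - A‖ ≤ (1 + W / m) * dist A B := mem_closedBall_iff_norm.1 <|
    (convex_closedBall A _).openSegment_subset (hball i (by omega)) (hball _ hi) hc.mem_openSegment
  refine ⟨(mul_nonneg (div_pos hρ.pos (hρ.const_pos hA0)).le (norm_nonneg _)).trans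
    (hu' _ ?_ ?_), (real_inner_le_norm _ _).trans (by gcongr)⟩
  · rw [map_sub, o.areaForm_apply_self, sub_zero]
    exact hc.areaForm_base_pos.le
  · rw [inner_sub_right, sub_nonpos]
    exact hn.inner_le_of_map_le hρ hA0 (hc.mem.le.trans haA)

lemma card_le_of_three_crossings (h : IsVisibleChain o Λ {x | ρ x < a} A B N P)
    (hΛ : IsAreaIntegral o Λ) (hρ : IsGauge ρ m M) (ha : 0 < a) (hW : 0 ≤ W) (hAB : 0 < ω A B)
    (hAW : ρ A ≤ a + W) (hBW : ρ B ≤ a + W) (hdist : 1 ≤ dist A B) (hnA : IsUnitNormal ρ A nA)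
    (hnB : IsUnitNormal ρ B nB) {F : Finset ℕ}
    (hF : ∀ i ∈ F, i ∈ crossingSteps {x | ρ x < a} N P ∧ i + 1 ∈ crossingSteps {x | ρ x < a} N P ∧
      i + 2 ∈ crossingSteps {x | ρ x < a} N P) :
    (F.card : ℝ) ≤ 4 + (16 * (2 * (2 * ((1 + W / m) * dist A B))) ^ 2 *
      (2 / (m / M) * InnerProductGeometry.angle nA nB / (m / M) ^ 2)) ^ (1 / 3 : ℝ) := by
  have hA0 : A ≠ 0 := by rintro rfl; simp at hAB
  have hK := hρ.convex_lt a
  have h0 : (0 : E) ∈ {x | ρ x < a} := by simpa [hρ.map_zero]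
  have hκ : 0 < m / M := div_pos hρ.pos (hρ.const_pos hA0)
  have hWm : 0 ≤ W / m := div_nonneg hW hρ.pos.le
  have hΘ := InnerProductGeometry.angle_nonneg nA nB
  obtain ⟨c, hc⟩ := h.exists_isCrossing hAB
  obtain ⟨u, hu, hu'⟩ := exists_transversal o hA0 hnA.norm_eq_one (hnA.div_mul_norm_le_inner hρ hA0)
  set C := crossingSteps {x | ρ x < a} N P
  have hne (i : ℕ) (hi : i ∈ C) : P (i + 1) - P i ≠ 0 := (hc i hi).step_ne_zero hK h0
  have hstep (i : ℕ) (hi : i ∈ C) : m / M * ‖P (i + 1) - P i‖ ≤ ⟪u, P (i + 1) - P i⟫ :=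
    hu' _ ((hc i hi).areaForm_step_pos hK h0).le ((hc i hi).inner_step_nonpos hρ ha hA0 hnA)
  have hpos (i : ℕ) (hi : i ∈ C) : 0 < ⟪u, P (i + 1) - P i⟫ :=
    (mul_pos hκ (norm_pos_iff.2 (hne i hi))).trans_le (hstep i hi)
  have hQB (i : ℕ) (hi : i ∈ C) : 0 ≤ ω (P (i + 1)) B :=
    areaForm_right_nonneg_of_mem_triangle hAB.le (h.mem_triangle _ hi.1)
  exact card_le_four_add_rpow o (w := fun i => P (i + 2) - P (i + 1)) hκ (by positivity)
    (fun i hi => hne _ (hF i hi).2.1) (fun i hi => hstep _ (hF i hi).2.1)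
    (h.sum_step_le hK h0 hc (innerₗ E u) hpos (by positivity)
      (fun i hi => h.inner_cut_mem_Icc hρ hAB hAW hBW hdist hnA hu hu' hi.1 (hc i hi)) hF)
    (fun i hi j hj hij => h.one_le_abs_areaForm_step_step hΛ hK h0 hAB (hF i hi).2.1 (hF j hj).2.1
      (by omega))
    fun i hi j hj _ => (hc _ (hF i hi).2.1).abs_areaForm_step_step_le (hc _ (hF j hj).2.1) hρ ha
      hnA hnB hAB (hQB _ (hF i hi).2.1) (hQB _ (hF j hj).2.1)

end IsVisibleChain

end VisibleChain

section SegmentsFromVertex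

variable {V : Type*} [AddCommGroup V] [Module ℝ V] {Λ : AddSubgroup V} {U : Set V} {A B P Q R : V}

lemma exists_eq_add_smul_of_mem_triangle (hP : P ∈ convexHull ℝ {0, A, B}) (hPA : P ≠ A) :
    ∃ σ v : ℝ, 0 < v ∧ P = A + v • (σ • B - A) := by
  obtain ⟨s, t, hs, ht, hst, rfl⟩ := mem_convexHull_zero_pair.1 hP
  have hs1 : s < 1 := by
    refine lt_of_le_of_ne (by linarith) ?_
    rintro rfl
    obtain rfl : t = 0 := by linarith
    exact hPA (by simp)
  refine ⟨t / (1 - s), 1 - s, sub_pos.2 hs1, ?_⟩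
  rw [smul_sub, smul_smul, mul_div_cancel₀ _ (sub_pos.2 hs1).ne']
  module

/-- The far endpoints of the maximal segments that start at `A`, end in `Λ` and are contained in
`U`. -/
def maximalSegmentEnds (Λ : AddSubgroup V) (U : Set V) (A : V) : Set V :=
  {P | P ∈ Λ ∧ P ≠ A ∧ segment ℝ A P ⊆ U ∧
    ∀ Q ∈ Λ, segment ℝ A Q ⊆ U → segment ℝ A P ⊆ segment ℝ A Q → Q = P}

lemma eq_of_mem_maximalSegmentEnds_of_sameRay (hQ : Q ∈ maximalSegmentEnds Λ U A)
    (hR : R ∈ maximalSegmentEnds Λ U A) (hQR : SameRay ℝ (Q - A) (R - A)) : Q = R := by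
  have hsub {X Y : V} (h : Wbtw ℝ A X Y) : segment ℝ A X ⊆ segment ℝ A Y :=
    (convex_segment A Y).segment_subset (left_mem_segment ℝ A Y) (mem_segment_iff_wbtw.2 h)
  obtain ⟨hQΛ, -, hQU, hQmax⟩ := hQ
  obtain ⟨hRΛ, -, hRU, hRmax⟩ := hR
  rcases wbtw_total_of_sameRay_vsub_left (x := A) hQR with h | h
  · exact (hQmax R hRΛ hRU (hsub h)).symm
  · exact hRmax Q hQΛ hQU (hsub h)

end SegmentsFromVertex

lemma exists_strictMonoOn_comp {α β : Type*} [Nonempty α] [LinearOrder β] (T : Finset α) {σ : α → β}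
    (hσ : Set.InjOn σ T) :
    ∃ P : ℕ → α, (∀ i < T.card, P i ∈ T) ∧ StrictMonoOn (σ ∘ P) (Set.Iio T.card) := by
  classical
  set e := (T.image σ).orderEmbOfFin (Finset.card_image_of_injOn hσ)
  have hex (i : ℕ) : ∃ x, ∀ hi : i < T.card, x ∈ T ∧ σ x = e ⟨i, hi⟩ := by
    by_cases hi : i < T.card
    · obtain ⟨x, hx, hxe⟩ := Finset.mem_image.1 ((T.image σ).orderEmbOfFin_mem _ ⟨i, hi⟩)
      exact ⟨x, fun _ => ⟨hx, hxe⟩⟩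
    · exact ⟨Classical.arbitrary α, fun h => absurd h hi⟩
  choose P hP using hex
  refine ⟨P, fun i hi => (hP i hi).1, fun i hi j hj hij => ?_⟩
  rw [Function.comp_apply, Function.comp_apply, (hP i hi).2, (hP j hj).2]
  exact e.strictMono hij

lemma finite_and_ncard_le_of_forall_finset {α : Type*} {s : Set α} {c : ℝ}
    (h : ∀ T : Finset α, ↑T ⊆ s → (T.card : ℝ) ≤ c) : s.Finite ∧ (s.ncard : ℝ) ≤ c := by
  have hfin : s.Finite := by
    by_contra hinf
    obtain ⟨T, hTs, hT⟩ := Set.Infinite.exists_subset_card_eq hinf (⌊c⌋₊ + 1)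
    have := h T hTs
    rw [hT] at this
    exact (Nat.lt_floor_add_one c).not_ge (by exact_mod_cast this)
  refine ⟨hfin, ?_⟩
  rw [Set.ncard_eq_toFinset_card s hfin]
  exact h _ (by simp)

section VisiblePoints

variable {E : Type*} [NormedAddCommGroup E] [InnerProductSpace ℝ E]
  [Fact (Module.finrank ℝ E = 2)] {o : Orientation ℝ E (Fin 2)} {K U : Set E} {A B nA nB : E}
  {Λ : AddSubgroup E} {P : ℕ → E} {N : ℕ} {ρ : E → ℝ} {m M a b W : ℝ}

local notation "ω" => o.areaForm

attribute [local instance] FiniteDimensional.of_fact_finrank_eq_two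

/-- The factor in front of `dist A B ^ (2 / 3) * angle nA nB ^ (1 / 3)` in the bound for the number
of visible points, for a gauge with bounds `m`, `M` and an annulus of width `W`. -/
def stepConst (m M W : ℝ) : ℝ := 8 * (M / m) * (1 + W / m) ^ (2 / 3 : ℝ)

lemma stepConst_nonneg (hm : 0 < m) (hM : 0 < M) (hW : 0 ≤ W) : 0 ≤ stepConst m M W := by
  unfold stepConst
  positivity

lemma rpow_one_third_eq_stepConst_mul (hm : 0 < m) (hM : 0 < M) (hW : 0 ≤ W) {L Θ : ℝ} (hL : 0 ≤ L)
    (hΘ : 0 ≤ Θ) :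
    (16 * (2 * (2 * ((1 + W / m) * L))) ^ 2 * (2 / (m / M) * Θ / (m / M) ^ 2)) ^ (1 / 3 : ℝ) =
      stepConst m M W * (L ^ (2 / 3 : ℝ) * Θ ^ (1 / 3 : ℝ)) := by
  have hcube : 16 * (2 * (2 * ((1 + W / m) * L))) ^ 2 * (2 / (m / M) * Θ / (m / M) ^ 2) =
      (8 * (M / m)) ^ 3 * ((1 + W / m) ^ 2 * (L ^ 2 * Θ)) := by
    field_simp
    ring
  have hsq {x : ℝ} (hx : 0 ≤ x) : (x ^ 2) ^ (1 / 3 : ℝ) = x ^ (2 / 3 : ℝ) := by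
    rw [← Real.rpow_natCast, ← Real.rpow_mul hx]
    norm_num
  have hcbrt {x : ℝ} (hx : 0 ≤ x) : (x ^ 3) ^ (1 / 3 : ℝ) = x := by
    rw [← Real.rpow_natCast, ← Real.rpow_mul hx]
    norm_num
  rw [hcube, Real.mul_rpow (by positivity) (by positivity), hcbrt (by positivity),
    Real.mul_rpow (by positivity) (by positivity), hsq (by positivity),
    Real.mul_rpow (by positivity) hΘ, hsq hL, stepConst, ← mul_assoc (8 * (M / m))]

lemma IsVisibleChain.card_le [MeasurableSpace E] [BorelSpace E]
    (h : IsVisibleChain o Λ {x | ρ x < a} A B N P) (hΛ : IsAreaIntegral o Λ) (hA : A ∈ Λ)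
    (hρ : IsGauge ρ m M) (ha : 0 < a) (hW : 0 ≤ W) (hAB : 0 < ω A B) (hAW : ρ A ≤ a + W)
    (hBW : ρ B ≤ a + W) (hdist : 1 ≤ dist A B) (hnA : IsUnitNormal ρ A nA)
    (hnB : IsUnitNormal ρ B nB) (hU : volume U ≠ ⊤)
    (hKU : convexHull ℝ {0, A, B} \ {x | ρ x < a} ⊆ U) :
    (N : ℝ) ≤ 7 + 48 * (volume U).toReal + stepConst m M W *
      (dist A B ^ (2 / 3 : ℝ) * InnerProductGeometry.angle nA nB ^ (1 / 3 : ℝ)) := by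
  classical
  set C := crossingSteps {x | ρ x < a} N P
  have hA0 : A ≠ 0 := by rintro rfl; simp at hAB
  have hV : 0 ≤ (volume U).toReal := ENNReal.toReal_nonneg
  have hX : 0 ≤ stepConst m M W *
      (dist A B ^ (2 / 3 : ℝ) * InnerProductGeometry.angle nA nB ^ (1 / 3 : ℝ)) :=
    mul_nonneg (stepConst_nonneg hρ.pos (hρ.const_pos hA0) hW) (mul_nonneg (by positivity)
      (Real.rpow_nonneg (InnerProductGeometry.angle_nonneg _ _) _))
  rcases lt_or_ge N 3 with hN | hN
  · have : (N : ℝ) ≤ 3 := by exact_mod_cast hN.le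
    linarith
  obtain ⟨n, rfl⟩ := Nat.exists_eq_add_of_le' hN
  have hF := h.card_le_of_three_crossings hΛ hρ ha hW hAB hAW hBW hdist hnA hnB
    (F := (Finset.range n).filter fun i => i ∈ C ∧ i + 1 ∈ C ∧ i + 2 ∈ C)
    fun i hi => (Finset.mem_filter.1 hi).2
  rw [rpow_one_third_eq_stepConst_mul hρ.pos (hρ.const_pos hA0) hW dist_nonneg
    (InnerProductGeometry.angle_nonneg _ _)] at hF
  have hZ := h.card_le_sixteen_mul_volume hΛ hA (hρ.convex_lt a) (by simpa [hρ.map_zero]) hAB hU hKU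
    (Z := (Finset.range (n + 2)).filter fun i => i ∉ C)
    (fun i hi => by have := Finset.mem_range.1 (Finset.mem_filter.1 hi).1; omega)
    fun i hi => (Finset.mem_filter.1 hi).2
  have hn : (n : ℝ) ≤ _ := Nat.cast_le.2 (le_card_filter_three_consecutive (· ∈ C) n)
  push_cast at hn ⊢
  linarith

lemma exists_isVisibleChain (hAB : 0 < ω A B) {T : Finset E} (hmem : ∀ P ∈ T, P ∈ Λ)
    (htri : ∀ P ∈ T, P ∈ convexHull ℝ {0, A, B}) (hne : ∀ P ∈ T, P ≠ A)
    (hvis : ∀ P ∈ T, Disjoint (segment ℝ A P) K)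
    (hray : ∀ P ∈ T, ∀ Q ∈ T, SameRay ℝ (P - A) (Q - A) → P = Q) :
    ∃ P, IsVisibleChain o Λ K A B T.card P := by
  have hpolar (P : E) (hP : P ∈ T) : ∃ σ v : ℝ, 0 < v ∧ P = A + v • (σ • B - A) :=
    exists_eq_add_smul_of_mem_triangle (htri P hP) (hne P hP)
  choose! σ v hv hσ using hpolar
  have hsub (P : E) (hP : P ∈ T) : P - A = v P • (σ P • B - A) := sub_eq_iff_eq_add'.2 (hσ P hP)
  have hinj : Set.InjOn σ T := fun P hP Q hQ h => hray P hP Q hQ <| by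
    rw [hsub P hP, hsub Q hQ, h]
    exact ((SameRay.refl _).pos_smul_left (hv P hP)).pos_smul_right (hv Q hQ)
  obtain ⟨P, hPT, hmono⟩ := exists_strictMonoOn_comp T hinj
  refine ⟨P, ⟨fun i j hij hj => ?_, fun i hi => hmem _ (hPT i hi), fun i hi => htri _ (hPT i hi),
    fun i hi => hvis _ (hPT i hi)⟩⟩
  have hPi := hPT i (hij.trans hj)
  have hPj := hPT j hj
  have harea : ω (P j - A) (P i - A) = v (P j) * v (P i) * (σ (P j) - σ (P i)) * ω A B := by
    rw [hsub _ hPi, hsub _ hPj]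
    simp only [map_sub, map_smul, LinearMap.sub_apply, LinearMap.smul_apply, smul_eq_mul,
      o.areaForm_apply_self, o.areaForm_swap B A]
    ring
  rw [harea]
  exact mul_pos (mul_pos (mul_pos (hv _ hPj) (hv _ hPi)) (sub_pos.2 (hmono (hij.trans hj) hj hij)))
    hAB

theorem ncard_maximalSegmentEnds_le [MeasurableSpace E] [BorelSpace E] (hΛ : IsAreaIntegral o Λ)
    (hA : A ∈ Λ) (hρ : IsGauge ρ m M) (ha : 0 < a) (hW : 0 ≤ W) (hb : b ≤ a + W) (hAB : 0 < ω A B)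
    (hAb : ρ A < b) (hBb : ρ B < b) (hdist : 1 ≤ dist A B) (hnA : IsUnitNormal ρ A nA)
    (hnB : IsUnitNormal ρ B nB) (hU : U = {x | a ≤ ρ x ∧ ρ x < b} ∩ convexHull ℝ {0, A, B}) :
    (maximalSegmentEnds Λ U A).Finite ∧ ((maximalSegmentEnds Λ U A).ncard : ℝ) ≤
      7 + 48 * (volume U).toReal + stepConst m M W *
        (dist A B ^ (2 / 3 : ℝ) * InnerProductGeometry.angle nA nB ^ (1 / 3 : ℝ)) := by
  have hUvol : volume U ≠ ⊤ := by
    have hbdd : Bornology.IsBounded (convexHull ℝ {0, A, B}) :=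
      isBounded_convexHull.2 (Set.toFinite _).isBounded
    exact (hbdd.subset (hU ▸ inter_subset_right)).measure_lt_top.ne
  have hKU : convexHull ℝ {0, A, B} \ {x | ρ x < a} ⊆ U := fun x hx => by
    have hsub : convexHull ℝ {0, A, B} ⊆ {x | ρ x < b} :=
      convexHull_min (by
        simp [insert_subset_iff, hρ.map_zero, hAb, hBb, (hρ.nonneg A).trans_lt hAb])
        (hρ.convex_lt b)
    exact hU ▸ ⟨⟨not_lt.1 hx.2, hsub hx.1⟩, hx.1⟩
  have hcard (T : Finset E) (hT : ↑T ⊆ maximalSegmentEnds Λ U A) : (T.card : ℝ) ≤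
      7 + 48 * (volume U).toReal + stepConst m M W *
        (dist A B ^ (2 / 3 : ℝ) * InnerProductGeometry.angle nA nB ^ (1 / 3 : ℝ)) := by
    have hTU (P : E) (hP : P ∈ T) :
        segment ℝ A P ⊆ {x | a ≤ ρ x ∧ ρ x < b} ∩ convexHull ℝ {0, A, B} := hU ▸ (hT hP).2.2.1
    obtain ⟨P, hP⟩ := exists_isVisibleChain (K := {x | ρ x < a}) hAB (fun P hP => (hT hP).1)
      (fun P hP => (hTU P hP (right_mem_segment ℝ A P)).2) (fun P hP => (hT hP).2.1)
      (fun P hP => Set.disjoint_left.2 fun x hx => not_lt.2 (hTU P hP hx).1.1)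
      fun P hP Q hQ => eq_of_mem_maximalSegmentEnds_of_sameRay (hT hP) (hT hQ)
    exact hP.card_le hΛ hA hρ ha hW hAB (hAb.le.trans hb) (hBb.le.trans hb) hdist hnA hnB hUvol hKU
  exact finite_and_ncard_le_of_forall_finset hcard

end VisiblePoints

section Plane

instance : Fact (Module.finrank ℝ E2 = 2) := ⟨finrank_euclideanSpace_fin⟩

/-- The counterclockwise orientation of the plane. -/
def planeOrientation : Orientation ℝ E2 (Fin 2) :=
  (EuclideanSpace.basisFun (Fin 2) ℝ).toBasis.orientation

lemma planeOrientation_areaForm (x y : E2) :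
    planeOrientation.areaForm x y = x 0 * y 1 - x 1 * y 0 := by
  rw [Orientation.areaForm_to_volumeForm,
    planeOrientation.volumeForm_robust (EuclideanSpace.basisFun (Fin 2) ℝ) rfl,
    Module.Basis.det_apply, Matrix.det_fin_two]
  simp [Module.Basis.toMatrix_apply]
  ring

/-- The lattice `ℤ²` in the plane. -/
def integerLattice : AddSubgroup E2 :=
  AddMonoidHom.range (AddMonoidHom.mk' ek fun p q => by ext i; simp [ek])

lemma isAreaIntegral_integerLattice : IsAreaIntegral planeOrientation integerLattice := by
  rintro _ ⟨p, rfl⟩ _ ⟨q, rfl⟩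
  refine ⟨p 0 * q 1 - p 1 * q 0, ?_⟩
  simp [planeOrientation_areaForm, ek]

lemma ek_injective : Function.Injective ek := fun p q h => funext fun i => by
  simpa [ek] using congrArg (· i) h

lemma one_le_dist_of_mem_integerLattice {x y : E2} (hx : x ∈ integerLattice)
    (hy : y ∈ integerLattice) (hxy : x ≠ y) : 1 ≤ dist x y := by
  obtain ⟨p, rfl⟩ := hx
  obtain ⟨q, rfl⟩ := hy
  obtain ⟨i, hi⟩ : ∃ i, p i ≠ q i := Function.ne_iff.1 (ne_of_apply_ne ek hxy)
  calc (1 : ℝ) ≤ |((p i - q i : ℤ) : ℝ)| := by exact_mod_cast Int.one_le_abs (sub_ne_zero.2 hi)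
    _ = ‖(ek p - ek q) i‖ := by simp [ek, Real.norm_eq_abs]
    _ ≤ dist (ek p) (ek q) := (PiLp.norm_apply_le _ i).trans_eq (dist_eq_norm _ _).symm

lemma card_eq_ncard_maximalSegmentEnds (U : Set E2) (A : E2) :
    Nat.card {k : Fin 2 → ℤ | ek k ≠ A ∧ segment ℝ A (ek k) ⊆ U ∧
      ∀ k' : Fin 2 → ℤ, segment ℝ A (ek k') ⊆ U →
        segment ℝ A (ek k) ⊆ segment ℝ A (ek k') → ek k' = ek k} =
      (maximalSegmentEnds integerLattice U A).ncard := by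
  rw [Nat.card_coe_set_eq, ← Set.ncard_image_of_injective _ ek_injective]
  congr 1
  ext x
  constructor
  · rintro ⟨k, hk, rfl⟩
    exact ⟨⟨k, rfl⟩, hk.1, hk.2.1, by rintro _ ⟨k', rfl⟩; exact hk.2.2 k'⟩
  · rintro ⟨⟨k, rfl⟩, h⟩
    exact ⟨k, ⟨h.1, h.2.1, fun k' => h.2.2 _ ⟨k', rfl⟩⟩, rfl⟩

end Plane

section SupportFunction

variable {Ω : Set E2} {x ξ : E2} {c : ℝ}

lemma bddAbove_image_inner (hΩ : Bornology.IsBounded Ω) (ξ : E2) :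
    BddAbove ((fun x => ⟪x, ξ⟫) '' Ω) := by
  obtain ⟨M, hM⟩ := hΩ.exists_norm_le
  refine ⟨M * ‖ξ‖, ?_⟩
  rintro _ ⟨x, hx, rfl⟩
  exact (real_inner_le_norm x ξ).trans (by gcongr; exact hM x hx)

lemma inner_le_suppFn (hΩ : Bornology.IsBounded Ω) (hx : x ∈ Ω) : ⟪x, ξ⟫ ≤ suppFn Ω ξ :=
  le_csSup (bddAbove_image_inner hΩ ξ) ⟨x, hx, rfl⟩

lemma suppFn_le (hΩ : Ω.Nonempty) (h : ∀ x ∈ Ω, ⟪x, ξ⟫ ≤ c) : suppFn Ω ξ ≤ c :=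
  csSup_le (hΩ.image _) (by rintro _ ⟨x, hx, rfl⟩; exact h x hx)

lemma suppFn_smul (Ω : Set E2) {t : ℝ} (ht : 0 ≤ t) (ξ : E2) :
    suppFn Ω (t • ξ) = t * suppFn Ω ξ := by
  rw [suppFn, suppFn, ← smul_eq_mul, ← Real.sSup_smul_of_nonneg ht, ← Set.image_smul,
    Set.image_image]
  simp only [real_inner_smul_right, smul_eq_mul]

lemma exists_isGauge_suppFn (hΩ : Ω ∈ nhds 0) (hbdd : Bornology.IsBounded Ω) :
    ∃ m M, IsGauge (suppFn Ω) m M := by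
  have hne : Ω.Nonempty := ⟨0, mem_of_mem_nhds hΩ⟩
  obtain ⟨d, hd, hball⟩ := Metric.nhds_basis_closedBall.mem_iff.1 hΩ
  obtain ⟨M, hM⟩ := hbdd.exists_norm_le
  refine ⟨d, M, hd, fun ξ η => ?_, fun t ht ξ => suppFn_smul Ω ht ξ, fun ξ => ?_, fun ξ => ?_⟩
  · refine suppFn_le hne fun x hx => ?_
    rw [inner_add_right]
    exact add_le_add (inner_le_suppFn hbdd hx) (inner_le_suppFn hbdd hx)
  · rcases eq_or_ne ξ 0 with rfl | hξ
    · simpa using inner_le_suppFn (ξ := 0) hbdd (mem_of_mem_nhds hΩ)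
    have hξ' : 0 < ‖ξ‖ := norm_pos_iff.2 hξ
    have hmem : (d / ‖ξ‖) • ξ ∈ Ω := hball <| by
      rw [mem_closedBall_zero_iff, norm_smul, Real.norm_of_nonneg (by positivity),
        div_mul_cancel₀ _ hξ'.ne']
    refine le_of_eq_of_le ?_ (inner_le_suppFn hbdd hmem)
    rw [real_inner_smul_left, real_inner_self_eq_norm_sq]
    field_simp
  · exact suppFn_le hne fun x hx => (real_inner_le_norm x ξ).trans (by gcongr; exact hM x hx)

end SupportFunction

theorem statement14_general {Ω : Set E2} (hΩ : Ω ∈ nhds 0) (hbdd : Bornology.IsBounded Ω) {W : ℝ}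
    (hW : 0 ≤ W) :
    ∃ C : ℝ, ∀ a b : ℝ, 0 < a → b ≤ a + W → ∀ A ∈ integerLattice, ∀ B ∈ integerLattice,
      suppFn Ω A < b → suppFn Ω B < b → 0 < A 0 * B 1 - A 1 * B 0 →
      ∀ U : Set E2, U = {x | a ≤ suppFn Ω x ∧ suppFn Ω x < b} ∩ convexHull ℝ {0, A, B} →
      ∀ nA nB : E2, ‖nA‖ = 1 → ‖nB‖ = 1 →
        (∀ y, suppFn Ω y ≤ 1 → ⟪y - (suppFn Ω A)⁻¹ • A, nA⟫ ≤ 0) →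
        (∀ y, suppFn Ω y ≤ 1 → ⟪y - (suppFn Ω B)⁻¹ • B, nB⟫ ≤ 0) →
      (maximalSegmentEnds integerLattice U A).Finite ∧
      (maximalSegmentEnds integerLattice U B).Finite ∧
      ((maximalSegmentEnds integerLattice U A).ncard : ℝ) +
        (maximalSegmentEnds integerLattice U B).ncard ≤
        C * (1 + (volume U).toReal +
          dist A B ^ (2 / 3 : ℝ) * InnerProductGeometry.angle nA nB ^ (1 / 3 : ℝ)) := by
  obtain ⟨m, M, hρ⟩ := exists_isGauge_suppFn hΩ hbdd
  refine ⟨2 * (48 + stepConst m M W),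
    fun a b ha hb A hA B hB hAb hBb hAB U hU nA nB hnA hnB hsA hsB => ?_⟩
  rw [← planeOrientation_areaForm] at hAB
  have hA0 : A ≠ 0 := by rintro rfl; simp at hAB
  have hB0 : B ≠ 0 := by rintro rfl; simp at hAB
  have hne : A ≠ B := by rintro rfl; simp at hAB
  have hdist := one_le_dist_of_mem_integerLattice hA hB hne
  have hnA' := IsUnitNormal.of_forall_inner_nonpos hρ hA0 hnA hsA
  have hnB' := IsUnitNormal.of_forall_inner_nonpos hρ hB0 hnB hsB
  have hBA : 0 < (-planeOrientation).areaForm B A := by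
    rwa [Orientation.areaForm_neg_orientation, LinearMap.neg_apply, LinearMap.neg_apply,
      ← Orientation.areaForm_swap]
  obtain ⟨hAfin, hAcard⟩ := ncard_maximalSegmentEnds_le isAreaIntegral_integerLattice hA hρ ha hW hb
    hAB hAb hBb hdist hnA' hnB' hU
  obtain ⟨hBfin, hBcard⟩ := ncard_maximalSegmentEnds_le isAreaIntegral_integerLattice.neg hB hρ ha
    hW hb hBA hBb hAb (dist_comm A B ▸ hdist) hnB' hnA' (hU.trans (by rw [Set.pair_comm]))
  rw [dist_comm, InnerProductGeometry.angle_comm] at hBcard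
  have hs := stepConst_nonneg hρ.pos (hρ.const_pos hA0) hW
  have hX : 0 ≤ dist A B ^ (2 / 3 : ℝ) * InnerProductGeometry.angle nA nB ^ (1 / 3 : ℝ) :=
    mul_nonneg (by positivity) (Real.rpow_nonneg (InnerProductGeometry.angle_nonneg _ _) _)
  refine ⟨hAfin, hBfin, (add_le_add hAcard hBcard).trans ?_⟩
  linarith [mul_nonneg hs (ENNReal.toReal_nonneg (a := volume U))]

/-- Lemma 8.1: let `Ω` be a bounded open convex planar domain containing
the origin with curvature bounded below in the generalized sense, `10 ≤ r ≤ R`,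
`√R ≤ h ≤ R`, `𝒜 = {r − 1/h ≤ ρ* < r + 1/h}` and `𝔸 = 𝒜 ∩ ℤ²`.  Let `A, B` be two
consecutive (in counterclockwise order) extreme points of the convex hull of `𝔸`, let
`S` be the closed triangle with vertices `A, B, 0`, and let `nA, nB` be the outward unit
normals of `∂Ω*` at the boundary points of `Ω*` on the rays through `A` resp. `B`
(uniquely determined, and characterized by the supporting property hypothesized below);
`Θ = ∠(nA, nB)` is then the total turning of the normal across the sector.  If `N⁻`
(resp. `N⁺`) denotes the number of maximal lattice line segments contained in `𝒜 ∩ S`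
with `A` (resp. `B`) as an endpoint, then
`N⁻ + N⁺ ≤ C (1 + area(𝒜 ∩ S) + |AB|^{2/3} Θ^{1/3})` with `C` independent of
`r, R, h, A, B`. -/
theorem statement14 (Ω : Set E2) (hconv : Convex ℝ Ω) (hopen : IsOpen Ω)
    (hbdd : Bornology.IsBounded Ω) (h0 : (0 : E2) ∈ Ω) (hcurv : CurvBddBelow Ω) :
    ∃ C : ℝ, ∀ r R h : ℝ, 10 ≤ r → r ≤ R → Real.sqrt R ≤ h → h ≤ R →
      ∀ 𝒜 : Set E2, 𝒜 = {x | r - 1 / h ≤ suppFn Ω x ∧ suppFn Ω x < r + 1 / h} →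
      ∀ 𝔸 : Set E2, 𝔸 = {x ∈ 𝒜 | ∃ k : Fin 2 → ℤ, ek k = x} →
      ∀ A B : E2, A ∈ Set.extremePoints ℝ (convexHull ℝ 𝔸) →
        B ∈ Set.extremePoints ℝ (convexHull ℝ 𝔸) → A ≠ B →
        -- `B` lies counterclockwise from `A`:
        0 < A 0 * B 1 - A 1 * B 0 →
        -- `A` and `B` are consecutive: no other extreme point lies in the closed cone
        -- spanned by `A` and `B`:
        (∀ X ∈ Set.extremePoints ℝ (convexHull ℝ 𝔸), X ≠ A → X ≠ B →
          ¬∃ s t : ℝ, 0 ≤ s ∧ 0 ≤ t ∧ X = s • A + t • B) →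
      ∀ S : Set E2, S = convexHull ℝ {(0 : E2), A, B} →
      ∀ nA nB : E2, ‖nA‖ = 1 → ‖nB‖ = 1 →
        (∀ y : E2, suppFn Ω y ≤ 1 → ⟪y - (suppFn Ω A)⁻¹ • A, nA⟫ ≤ 0) →
        (∀ y : E2, suppFn Ω y ≤ 1 → ⟪y - (suppFn Ω B)⁻¹ • B, nB⟫ ≤ 0) →
      ((Nat.card {k : Fin 2 → ℤ | ek k ≠ A ∧ segment ℝ A (ek k) ⊆ 𝒜 ∩ S ∧
            ∀ k' : Fin 2 → ℤ, segment ℝ A (ek k') ⊆ 𝒜 ∩ S →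
              segment ℝ A (ek k) ⊆ segment ℝ A (ek k') → ek k' = ek k} : ℝ) +
        (Nat.card {k : Fin 2 → ℤ | ek k ≠ B ∧ segment ℝ B (ek k) ⊆ 𝒜 ∩ S ∧
            ∀ k' : Fin 2 → ℤ, segment ℝ B (ek k') ⊆ 𝒜 ∩ S →
              segment ℝ B (ek k) ⊆ segment ℝ B (ek k') → ek k' = ek k} : ℝ)) ≤
        C * (1 + (volume (𝒜 ∩ S)).toReal +
          dist A B ^ ((2 : ℝ) / 3) * InnerProductGeometry.angle nA nB ^ ((1 : ℝ) / 3)) := by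
  obtain ⟨C, hC⟩ := statement14_general (hopen.mem_nhds h0) hbdd zero_le_two
  refine ⟨C, ?_⟩
  rintro r R h hr hrR hRh - 𝒜 rfl 𝔸 rfl A B hA hB - hAB - S rfl nA nB hnA hnB hsA hsB
  have hh : 1 ≤ h := (Real.one_le_sqrt.2 (by linarith)).trans hRh
  have hh' : 1 / h ≤ 1 := div_le_one_of_le₀ hh (by linarith)
  obtain ⟨hA𝒜, hAΛ⟩ := extremePoints_convexHull_subset hA
  obtain ⟨hB𝒜, hBΛ⟩ := extremePoints_convexHull_subset hB
  rw [card_eq_ncard_maximalSegmentEnds, card_eq_ncard_maximalSegmentEnds]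
  exact (hC (r - 1 / h) (r + 1 / h) (by linarith) (by linarith) A hAΛ B hBΛ hA𝒜.2 hB𝒜.2 hAB _ rfl nA
    nB hnA hnB hsA hsB).2.2

end
end

section
/- Let Ω be a bounded open convex set in ℝ² containing the origin in its interior, with r₁ < 1 < r₂ the radii of inscribed and circumscribed circles centered at the origin. Then there is a constant C depending only on r₁ and r₂ such that for all r ≥ 10 and h ≥ 1, the convex hull of the set 𝔸 = {ℓ ∈ ℤ² : r − 1/h ≤ ρ*(ℓ) < r + 1/h} has at most C r^{2/3} extreme points. -/
/-!
Only the size of `𝔸` matters: since `Ω` contains a disc about the origin, `suppFn Ω` dominates a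
multiple of the norm, so `𝔸` consists of lattice points in a disc of radius `O(r)`, and the claim
becomes the classical bound for the number of vertices of a convex lattice polygon.

Each vertex is the strict maximum of a linear functional. The vertices whose functional lies in a
given quadrant are, up to a reflection, the vertices of a convex increasing lattice path. Its slopes
increase strictly, so its steps are pairwise distinct vectors of `ℕ²`; but a set of `n` vectors of
`ℕ²` has total `ℓ¹`-length of order at least `n ^ (3/2)`, and the total length of the steps is
`O(r)` because it telescopes.
-/

open MeasureTheory Set
open scoped Pointwise RealInnerProductSpace NNReal ENNReal

noncomputable section

lemma mul_card_le_pow_three_add_sum {T : Finset (ℤ × ℤ)} (hT : ∀ d ∈ T, 0 ≤ d) (L : ℕ) :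
    (L : ℤ) * T.card ≤ L ^ 3 + ∑ d ∈ T, (d.1 + d.2) := by
  let box : Finset (ℤ × ℤ) := Finset.Ico (0 : ℤ) L ×ˢ Finset.Ico (0 : ℤ) L
  have hbox : box.card = L ^ 2 := by simp [box, sq]
  have hcard : T.card ≤ (T \ box).card + L ^ 2 := by
    rw [← hbox]
    exact Finset.card_le_card_sdiff_add_card
  have hlong : ∀ d ∈ T \ box, (L : ℤ) ≤ d.1 + d.2 := by
    intro d hd
    simp only [box, Finset.mem_sdiff, Finset.mem_product, Finset.mem_Ico] at hd
    have := Prod.le_def.1 (hT d hd.1)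
    simp only [Prod.fst_zero, Prod.snd_zero] at this
    omega
  calc (L : ℤ) * T.card ≤ L * ((T \ box).card + L ^ 2) := by gcongr; exact_mod_cast hcard
    _ = L ^ 3 + (T \ box).card • (L : ℤ) := by rw [nsmul_eq_mul]; ring
    _ ≤ L ^ 3 + ∑ d ∈ T \ box, (d.1 + d.2) := by
      gcongr
      exact Finset.card_nsmul_le_sum _ _ _ hlong
    _ ≤ L ^ 3 + ∑ d ∈ T, (d.1 + d.2) := by
      refine add_le_add_right
        (Finset.sum_le_sum_of_subset_of_nonneg Finset.sdiff_subset fun d hd _ => ?_) _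
      exact add_nonneg (hT d hd).1 (hT d hd).2

lemma one_le_fst_add_snd {d : ℤ × ℤ} (hd : 0 < d) : 1 ≤ d.1 + d.2 := by
  have := Prod.lt_iff.1 hd
  simp only [Prod.fst_zero, Prod.snd_zero] at this
  omega

lemma card_le_three_mul_rpow {T : Finset (ℤ × ℤ)} (hT : ∀ d ∈ T, 0 < d) {s : ℝ}
    (hs : ((∑ d ∈ T, (d.1 + d.2) : ℤ) : ℝ) ≤ s) : (T.card : ℝ) ≤ 3 * s ^ (2 / 3 : ℝ) := by
  rcases T.eq_empty_or_nonempty with rfl | hne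
  · have : 0 ≤ s := by simpa using hs
    simp only [Finset.card_empty, Nat.cast_zero]
    positivity
  have hs1 : 1 ≤ s := by
    have hcard : (T.card : ℤ) ≤ ∑ d ∈ T, (d.1 + d.2) := by
      simpa using Finset.card_nsmul_le_sum T _ 1 fun d hd => one_le_fst_add_snd (hT d hd)
    have hone : (1 : ℤ) ≤ ∑ d ∈ T, (d.1 + d.2) := by
      have := hne.card_pos
      omega
    exact le_trans (by exact_mod_cast hone) hs
  obtain ⟨t, ht, hts, hts'⟩ : ∃ t : ℝ, 1 ≤ t ∧ t ^ 3 = s ∧ t ^ 2 = s ^ (2 / 3 : ℝ) := by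
    refine ⟨s ^ (1 / 3 : ℝ), Real.one_le_rpow hs1 (by norm_num), ?_, ?_⟩ <;>
    · rw [← Real.rpow_natCast, ← Real.rpow_mul (by linarith)]
      norm_num
  -- Cutting the vectors at length `L ≈ s ^ (1/3)` balances the numbers of short and long ones.
  let L : ℕ := ⌊t⌋₊
  have hL : (1 : ℝ) ≤ L := by exact_mod_cast (Nat.one_le_floor_iff t).2 ht
  have hLt : (L : ℝ) ≤ t := Nat.floor_le (by linarith)
  have htL : t ≤ 2 * L := by linarith [Nat.lt_floor_add_one t]
  have hcount : (L : ℝ) * T.card ≤ L ^ 3 + ((∑ d ∈ T, (d.1 + d.2) : ℤ) : ℝ) := by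
    exact_mod_cast mul_card_le_pow_three_add_sum (fun d hd => (hT d hd).le) L
  rw [← hts']
  refine le_of_mul_le_mul_left ?_ (by linarith : (0 : ℝ) < L)
  calc (L : ℝ) * T.card ≤ L * L ^ 2 + t * t ^ 2 := by linarith
    _ ≤ L * t ^ 2 + 2 * L * t ^ 2 := by gcongr
    _ = L * (3 * t ^ 2) := by ring

lemma length_le_of_injOn_steps {p : ℕ → ℤ × ℤ} {n : ℕ} (hp : ∀ i < n, p i < p (i + 1))
    (hinj : InjOn (fun i => p (i + 1) - p i) (Iio n)) {s : ℝ}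
    (hs : (((p n - p 0).1 + (p n - p 0).2 : ℤ) : ℝ) ≤ s) : (n : ℝ) ≤ 3 * s ^ (2 / 3 : ℝ) := by
  classical
  have hinj' : InjOn (fun i => p (i + 1) - p i) (Finset.range n) := by
    rwa [Finset.coe_range]
  let steps := (Finset.range n).image fun i => p (i + 1) - p i
  have hpos : ∀ d ∈ steps, 0 < d := by
    simp only [steps, Finset.mem_image, Finset.mem_range]
    rintro _ ⟨i, hi, rfl⟩
    exact sub_pos.2 (hp i hi)
  have hcard : steps.card = n := by
    rw [Finset.card_image_of_injOn hinj', Finset.card_range]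
  have hsum : ∑ d ∈ steps, (d.1 + d.2) = (p n - p 0).1 + (p n - p 0).2 := by
    rw [Finset.sum_add_distrib, ← Prod.fst_sum, ← Prod.snd_sum, Finset.sum_image hinj',
      Finset.sum_range_sub]
  rw [← hcard]
  exact card_le_three_mul_rpow hpos (by rwa [hsum])

lemma exists_strictMonoOn_comp_enumeration {ι α : Type*} [LinearOrder α] {S : Finset ι}
    (hS : S.Nonempty) {f : ι → α} (hf : InjOn f S) :
    ∃ p : ℕ → ι, (∀ i, p i ∈ S) ∧ StrictMonoOn (f ∘ p) (Iio S.card) := by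
  classical
  let e := (S.image f).orderEmbOfFin (Finset.card_image_of_injOn hf)
  have he : ∀ i, ∃ v ∈ S, f v = e i := fun i =>
    Finset.mem_image.1 ((S.image f).orderEmbOfFin_mem _ i)
  choose q hqS hq using he
  have : NeZero S.card := ⟨hS.card_pos.ne'⟩
  refine ⟨fun i => q (Fin.ofNat S.card i), fun i => hqS _, fun i hi j hj hij => ?_⟩
  simp only [Function.comp_apply, hq]
  refine e.strictMono ?_
  simpa [Fin.lt_def, Nat.mod_eq_of_lt (mem_Iio.1 hi), Nat.mod_eq_of_lt (mem_Iio.1 hj)] using hij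

section OrderedField

variable {𝕜 : Type*} [Field 𝕜] [LinearOrder 𝕜] [IsStrictOrderedRing 𝕜]

lemma lt_of_le_of_mul_sub_mul_lt {a b x y x' y' : 𝕜} (ha : 0 ≤ a) (hb : 0 ≤ b)
    (h : a * x' - b * y' < a * x - b * y) (hx : x ≤ x') : y < y' := by
  by_contra! hy
  have hax : a * x ≤ a * x' := by gcongr
  have hby : b * y' ≤ b * y := by gcongr
  linarith

lemma div_lt_div_of_mul_lt_mul {a b dx dy ex ey : 𝕜} (ha : 0 ≤ a) (hb : 0 ≤ b) (hdx : 0 < dx)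
    (hex : 0 < ex) (hd : b * dy < a * dx) (he : a * ex < b * ey) : dy / dx < ey / ex := by
  have hb' : 0 < b := hb.lt_of_ne' fun h => by
    rw [h, zero_mul] at he
    exact he.not_ge (by positivity)
  calc dy / dx < a / b := by rw [div_lt_div_iff₀ hdx hb']; linarith
    _ < ey / ex := by rw [div_lt_div_iff₀ hb' hex]; linarith

lemma exists_units_mul_nonneg (c : 𝕜) : ∃ u : ℤˣ, 0 ≤ ((u : ℤ) : 𝕜) * c := by
  rcases le_total 0 c with hc | hc
  · exact ⟨1, by simpa⟩
  · exact ⟨-1, by simpa⟩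

end OrderedField

-- The functionals `a X - b Y` below point into the fourth quadrant, which makes both coordinates
-- increase along the chain of exposed points.
section ExposedLatticePoints

variable {ι : Type*} {S : Finset ι} {X Y : ι → ℤ} {a b : ι → ℝ}

lemma strictMonoOn_slope_of_exposed (ha : ∀ v ∈ S, 0 ≤ a v) (hb : ∀ v ∈ S, 0 ≤ b v)
    (hexp : ∀ v ∈ S, ∀ w ∈ S, w ≠ v → a v * X w - b v * Y w < a v * X v - b v * Y v)
    {p : ℕ → ι} (hpS : ∀ i, p i ∈ S) {n : ℕ} (hX : ∀ i < n, X (p i) < X (p (i + 1))) :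
    StrictMonoOn (fun i => ((Y (p (i + 1)) - Y (p i) : ℤ) : ℝ) / (X (p (i + 1)) - X (p i) : ℤ))
      (Iio n) := by
  have hne : ∀ i < n, p (i + 1) ≠ p i := fun i hi h => (hX i hi).ne' (congrArg X h)
  refine strictMonoOn_of_lt_add_one ordConnected_Iio fun i _ hi hi' => ?_
  -- Both adjacent steps are compared with the functional exposing their common vertex.
  have hpred := hexp _ (hpS (i + 1)) _ (hpS i) (hne i hi).symm
  have hsucc := hexp _ (hpS (i + 1)) _ (hpS (i + 1 + 1)) (hne (i + 1) hi')
  refine div_lt_div_of_mul_lt_mul (ha _ (hpS (i + 1))) (hb _ (hpS (i + 1)))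
    (by exact_mod_cast sub_pos.2 (hX i hi)) (by exact_mod_cast sub_pos.2 (hX (i + 1) hi')) ?_ ?_ <;>
  · push_cast
    linarith

lemma card_le_of_exposed_of_nonneg (ha : ∀ v ∈ S, 0 ≤ a v) (hb : ∀ v ∈ S, 0 ≤ b v)
    (hexp : ∀ v ∈ S, ∀ w ∈ S, w ≠ v → a v * X w - b v * Y w < a v * X v - b v * Y v)
    {M : ℝ} (hM : 0 ≤ M) (hX : ∀ v ∈ S, |(X v : ℝ)| ≤ M) (hY : ∀ v ∈ S, |(Y v : ℝ)| ≤ M) :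
    (S.card : ℝ) ≤ 3 * (4 * M) ^ (2 / 3 : ℝ) + 1 := by
  rcases S.eq_empty_or_nonempty with rfl | hne
  · simp only [Finset.card_empty, Nat.cast_zero]
    positivity
  have hYlt : ∀ v ∈ S, ∀ w ∈ S, w ≠ v → X v ≤ X w → Y v < Y w := fun v hv w hw hwv hle =>
    Int.cast_lt.1 <|
      lt_of_le_of_mul_sub_mul_lt (ha v hv) (hb v hv) (hexp v hv w hw hwv) (Int.cast_le.2 hle)
  have hXinj : InjOn X S := fun v hv w hw h => by
    by_contra hvw
    exact (hYlt v hv w hw (Ne.symm hvw) h.le).asymm (hYlt w hw v hv hvw h.ge)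
  obtain ⟨p, hpS, hpX⟩ := exists_strictMonoOn_comp_enumeration hne hXinj
  obtain ⟨n, hn⟩ : ∃ n, S.card = n + 1 := Nat.exists_eq_add_one.2 hne.card_pos
  rw [hn] at hpX ⊢
  let P : ℕ → ℤ × ℤ := fun i => (X (p i), Y (p i))
  have hXlt : ∀ i < n, X (p i) < X (p (i + 1)) := fun i hi =>
    hpX (mem_Iio.2 (by omega)) (mem_Iio.2 (by omega)) (Nat.lt_succ_self i)
  have hPlt : ∀ i < n, P i < P (i + 1) := fun i hi =>
    Prod.mk_lt_mk_of_lt_of_le (hXlt i hi) <| le_of_lt <|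
      hYlt _ (hpS i) _ (hpS _) (fun h => (hXlt i hi).ne' (congrArg X h)) (hXlt i hi).le
  have hsteps : InjOn (fun i => P (i + 1) - P i) (Iio n) :=
    InjOn.of_comp (g := fun d : ℤ × ℤ => (d.2 : ℝ) / d.1)
      (strictMonoOn_slope_of_exposed ha hb hexp hpS hXlt).injOn
  have htotal : (((P n - P 0).1 + (P n - P 0).2 : ℤ) : ℝ) ≤ 4 * M := by
    simp only [P, Prod.mk_sub_mk, Int.cast_add, Int.cast_sub]
    linarith [abs_le.1 (hX _ (hpS n)), abs_le.1 (hX _ (hpS 0)), abs_le.1 (hY _ (hpS n)),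
      abs_le.1 (hY _ (hpS 0))]
  push_cast
  linarith [length_le_of_injOn_steps hPlt hsteps htotal]

lemma card_le_of_exposed
    (hexp : ∀ v ∈ S, ∀ w ∈ S, w ≠ v → a v * X w + b v * Y w < a v * X v + b v * Y v)
    {M : ℝ} (hM : 0 ≤ M) (hX : ∀ v ∈ S, |(X v : ℝ)| ≤ M) (hY : ∀ v ∈ S, |(Y v : ℝ)| ≤ M) :
    (S.card : ℝ) ≤ 4 * (3 * (4 * M) ^ (2 / 3 : ℝ) + 1) := by
  classical
  choose σ hσ using fun v => exists_units_mul_nonneg (a v)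
  choose τ hτ using fun v => exists_units_mul_nonneg (-b v)
  have hquadrant : ∀ c : ℤˣ × ℤˣ,
      ((S.filter fun v => (σ v, τ v) = c).card : ℝ) ≤ 3 * (4 * M) ^ (2 / 3 : ℝ) + 1 := by
    rintro ⟨u, u'⟩
    have hsigns : ∀ v ∈ S.filter fun v => (σ v, τ v) = (u, u'), v ∈ S ∧ σ v = u ∧ τ v = u' :=
      fun v hv => by simpa using hv
    have hcancel : ∀ (u : ℤˣ) (c : ℝ) (k : ℤ), (u : ℤ) * c * (u * k : ℤ) = c * k := by
      intro u c k
      rcases Int.units_eq_one_or u with rfl | rfl <;> simp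
    have habs : ∀ (u : ℤˣ) (k : ℤ), |((u * k : ℤ) : ℝ)| = |(k : ℝ)| := by
      intro u k
      rcases Int.units_eq_one_or u with rfl | rfl <;> simp
    refine card_le_of_exposed_of_nonneg (a := fun v => (u : ℤ) * a v)
      (b := fun v => (u' : ℤ) * -b v) (X := fun v => u * X v) (Y := fun v => u' * Y v)
      (fun v hv => (hsigns v hv).2.1 ▸ hσ v) (fun v hv => (hsigns v hv).2.2 ▸ hτ v)
      (fun v hv w hw hwv => ?_) hM (fun v hv => ?_) fun v hv => ?_
    · simp only [hcancel]
      linarith [hexp v (hsigns v hv).1 w (hsigns w hw).1 hwv]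
    · exact (habs u _).trans_le (hX v (hsigns v hv).1)
    · exact (habs u' _).trans_le (hY v (hsigns v hv).1)
  have hfibers := Finset.card_eq_sum_card_fiberwise (s := S) (t := Finset.univ)
    (f := fun v => (σ v, τ v)) fun _ _ => Finset.mem_coe.2 (Finset.mem_univ _)
  calc (S.card : ℝ) = ∑ c : ℤˣ × ℤˣ, ((S.filter fun v => (σ v, τ v) = c).card : ℝ) := by
        exact_mod_cast hfibers
    _ ≤ Fintype.card (ℤˣ × ℤˣ) • (3 * (4 * M) ^ (2 / 3 : ℝ) + 1) :=
        Finset.sum_le_card_nsmul _ _ _ fun c _ => hquadrant c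
    _ = 4 * (3 * (4 * M) ^ (2 / 3 : ℝ) + 1) := by
        rw [show Fintype.card (ℤˣ × ℤˣ) = 4 from rfl, nsmul_eq_mul]
        norm_num

end ExposedLatticePoints

lemma extremePoints_convexHull_subset_exposedPoints {E : Type*} [AddCommGroup E] [Module ℝ E]
    [TopologicalSpace E] [IsTopologicalAddGroup E] [ContinuousSMul ℝ E] [LocallyConvexSpace ℝ E]
    [T2Space E] {A : Set E} (hA : A.Finite) :
    extremePoints ℝ (convexHull ℝ A) ⊆ exposedPoints ℝ A := by
  intro v hv
  have hvA : v ∈ A := extremePoints_convexHull_subset hv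
  rw [(convex_convexHull ℝ A).mem_extremePoints_iff_mem_sdiff_convexHull_sdiff] at hv
  have hv' : v ∉ convexHull ℝ (A \ {v}) := fun h =>
    hv.2 (convexHull_mono (sdiff_subset_sdiff_left (subset_convexHull ℝ A)) h)
  obtain ⟨l, u, hlu, hl⟩ := geometric_hahn_banach_closed_point (convex_convexHull ℝ (A \ {v}))
    ((hA.subset sdiff_subset).isClosed_convexHull ℝ) hv'
  have hlt : ∀ w ∈ A, w ≠ v → l w < l v := fun w hw hwv =>
    (hlu w (subset_convexHull ℝ _ ⟨hw, hwv⟩)).trans hl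
  refine ⟨hvA, l, fun w hw => ⟨?_, fun hle => ?_⟩⟩
  · rcases eq_or_ne w v with rfl | hwv
    · exact le_rfl
    · exact (hlt w hw hwv).le
  · by_contra hwv
    exact (hlt w hw hwv).not_ge hle

lemma abs_le_norm_ek (k : Fin 2 → ℤ) (i : Fin 2) : |(k i : ℝ)| ≤ ‖ek k‖ :=
  PiLp.norm_apply_le (ek k) i

lemma finite_of_norm_le_of_subset_range_ek {A : Set E2} (hA : A ⊆ range ek) {M : ℝ}
    (hAM : ∀ x ∈ A, ‖x‖ ≤ M) : A.Finite := by
  have hsub : A ⊆ ek '' Metric.closedBall 0 M := by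
    intro x hx
    obtain ⟨k, rfl⟩ := hA hx
    refine ⟨k, mem_closedBall_zero_iff.2 ?_, rfl⟩
    refine (pi_norm_le_iff_of_nonneg ((norm_nonneg _).trans (hAM _ hx))).2 fun i => ?_
    rw [Int.norm_eq_abs]
    exact (abs_le_norm_ek k i).trans (hAM _ hx)
  exact ((isCompact_closedBall _ _).finite_of_discrete.image ek).subset hsub

lemma card_extremePoints_convexHull_le {A : Set E2} (hA : A ⊆ range ek) {M : ℝ} (hM : 1 ≤ M)
    (hAM : ∀ x ∈ A, ‖x‖ ≤ M) :
    (Nat.card (extremePoints ℝ (convexHull ℝ A)) : ℝ) ≤ 16 * (4 * M) ^ (2 / 3 : ℝ) := by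
  have hAfin : A.Finite := finite_of_norm_le_of_subset_range_ek hA hAM
  let V : Set E2 := extremePoints ℝ (convexHull ℝ A)
  have hVA : V ⊆ A := extremePoints_convexHull_subset
  have hVfin : (ek ⁻¹' V).Finite := (hAfin.subset hVA).preimage ek_injective.injOn
  have hcard : Nat.card V = hVfin.toFinset.card := by
    rw [← ncard_eq_toFinset_card _ hVfin, ← ncard_image_of_injective _ ek_injective,
      image_preimage_eq_of_subset (hVA.trans hA), Nat.card_coe_set_eq]
  have hexp : ∀ k, ek k ∈ V → ∃ a b : ℝ, ∀ m, ek m ∈ A → m ≠ k →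
      a * m 0 + b * m 1 < a * k 0 + b * k 1 := by
    intro k hk
    obtain ⟨-, l, hl⟩ := extremePoints_convexHull_subset_exposedPoints hAfin hk
    let g : E2 := (InnerProductSpace.toDual ℝ E2).symm l
    have hg : ∀ m, l (ek m) = g 0 * m 0 + g 1 * m 1 := fun m => by
      rw [← InnerProductSpace.toDual_symm_apply, PiLp.inner_apply, Fin.sum_univ_two]
      exact congrArg₂ (· + ·) (mul_comm _ _) (mul_comm _ _)
    refine ⟨g 0, g 1, fun m hm hmk => ?_⟩
    have hlt : l (ek m) < l (ek k) := lt_of_not_ge fun hle =>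
      hmk (ek_injective ((hl _ hm).2 hle))
    rwa [hg, hg] at hlt
  choose! a b hab using hexp
  have hVcard := card_le_of_exposed (S := hVfin.toFinset) (X := fun k => k 0) (Y := fun k => k 1)
    (fun k hk m hm => hab k (by simpa using hk) m (hVA (by simpa using hm)))
    (by linarith : 0 ≤ M)
    (fun k hk => (abs_le_norm_ek k 0).trans (hAM _ (hVA (by simpa using hk))))
    (fun k hk => (abs_le_norm_ek k 1).trans (hAM _ (hVA (by simpa using hk))))
  have hone : 1 ≤ (4 * M) ^ (2 / 3 : ℝ) := Real.one_le_rpow (by linarith) (by norm_num)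
  calc (Nat.card V : ℝ) ≤ 4 * (3 * (4 * M) ^ (2 / 3 : ℝ) + 1) := by rw [hcard]; exact hVcard
    _ ≤ 16 * (4 * M) ^ (2 / 3 : ℝ) := by linarith

section SupportFunction

variable {Ω : Set E2}

lemma inner_le_suppFn_of_mem_closure (hΩ : Bornology.IsBounded Ω) {y : E2} (hy : y ∈ closure Ω)
    (x : E2) : ⟪y, x⟫ ≤ suppFn Ω x := by
  have hbdd : BddAbove ((fun y : E2 => ⟪y, x⟫) '' Ω) :=
    (((innerSL ℝ).flip x).lipschitz.isBounded_image hΩ).bddAbove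
  exact closure_minimal (fun z hz => le_csSup hbdd (mem_image_of_mem _ hz))
    (isClosed_le (f := fun y => ⟪y, x⟫) (by fun_prop) continuous_const) hy

lemma mul_norm_le_suppFn (hΩ : Bornology.IsBounded Ω) {r₁ : ℝ} (hr₁ : 0 < r₁)
    (hball : Metric.ball 0 r₁ ⊆ Ω) (x : E2) : r₁ * ‖x‖ ≤ suppFn Ω x := by
  -- For `x = 0` the test point is `(r₁ / 0) • 0 = 0`, which also works.
  have hmem : (r₁ / ‖x‖) • x ∈ closure Ω := by
    refine closure_mono hball ?_
    rw [closure_ball _ hr₁.ne', mem_closedBall_zero_iff, norm_smul,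
      Real.norm_of_nonneg (by positivity)]
    exact mul_le_of_le_div₀ hr₁.le (norm_nonneg x) le_rfl
  calc r₁ * ‖x‖ = ⟪(r₁ / ‖x‖) • x, x⟫ := by
        rw [real_inner_smul_left, real_inner_self_eq_norm_mul_norm]
        field_simp
    _ ≤ suppFn Ω x := inner_le_suppFn_of_mem_closure hΩ hmem x

end SupportFunction

theorem statement15_general {r₁ : ℝ} (hr₁ : 0 < r₁) :
    ∃ C : ℝ, ∀ Ω : Set E2, Bornology.IsBounded Ω → Metric.ball 0 r₁ ⊆ Ω →
      ∀ r h : ℝ, 1 ≤ r → 1 ≤ h →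
        ∀ A ⊆ {x : E2 | (∃ k : Fin 2 → ℤ, ek k = x) ∧ suppFn Ω x < r + 1 / h},
          (Nat.card (extremePoints ℝ (convexHull ℝ A)) : ℝ) ≤ C * r ^ ((2 : ℝ) / 3) := by
  refine ⟨16 * (4 * (2 / r₁ + 1)) ^ (2 / 3 : ℝ), fun Ω hΩ hball r h hr hh A hA => ?_⟩
  have hradius : 1 ≤ (2 / r₁ + 1) * r := by
    have : 0 ≤ 2 / r₁ * r := by positivity
    linarith
  have hnorm : ∀ x ∈ A, ‖x‖ ≤ (2 / r₁ + 1) * r := fun x hx => by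
    have hsupp : r₁ * ‖x‖ ≤ 2 * r := by
      linarith [mul_norm_le_suppFn hΩ hr₁ hball x, (hA hx).2, (div_le_one (by linarith)).2 hh]
    calc ‖x‖ ≤ 2 * r / r₁ := by rwa [le_div_iff₀' hr₁]
      _ = 2 / r₁ * r := by ring
      _ ≤ (2 / r₁ + 1) * r := by linarith
  calc (Nat.card (extremePoints ℝ (convexHull ℝ A)) : ℝ)
      ≤ 16 * (4 * ((2 / r₁ + 1) * r)) ^ (2 / 3 : ℝ) :=
        card_extremePoints_convexHull_le (fun x hx => (hA hx).1) hradius hnorm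
    _ = 16 * (4 * (2 / r₁ + 1)) ^ (2 / 3 : ℝ) * r ^ (2 / 3 : ℝ) := by
        rw [← mul_assoc 4, Real.mul_rpow (by positivity) (by linarith), mul_assoc 16]

/-- for a bounded open convex planar domain `Ω` with inscribed and
circumscribed radii `r₁ < 1 < r₂` about the origin, the convex hull of the set of lattice
points `𝔸 = {ℓ ∈ ℤ² : r − 1/h ≤ ρ*(ℓ) < r + 1/h}` has at most `C r^{2/3}` extreme points,
with `C` depending only on `r₁` and `r₂`. -/
theorem statement15 (r₁ r₂ : ℝ) (hr₁ : 0 < r₁) (h1 : r₁ < 1) (h2 : 1 < r₂) :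
    ∃ C : ℝ, ∀ Ω : Set E2, Convex ℝ Ω → IsOpen Ω → Bornology.IsBounded Ω →
      Metric.ball 0 r₁ ⊆ Ω → Ω ⊆ Metric.closedBall 0 r₂ →
      ∀ r h : ℝ, 10 ≤ r → 1 ≤ h →
        (Nat.card (Set.extremePoints ℝ (convexHull ℝ
            {x : E2 | (∃ k : Fin 2 → ℤ, ek k = x) ∧
              r - 1 / h ≤ suppFn Ω x ∧ suppFn Ω x < r + 1 / h})) : ℝ) ≤
          C * r ^ ((2 : ℝ) / 3) := by
  obtain ⟨C, hC⟩ := statement15_general hr₁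
  exact ⟨C, fun Ω _ _ hΩ hball _ r h hr hh =>
    hC Ω hΩ hball r h (by linarith) hh _ fun x hx => ⟨hx.1, hx.2.2⟩⟩

end
end

section
/- Let ρ : ℝ^d → ℝ be any function (in the application, the Minkowski functional of a convex body), let A ⊂ ℝ^d be a finite set, and let ε > 0. Define m_{ρ,ε}(A) = max{card(F) : F ⊆ ρ(A) and |s − t| > ε for all distinct s, t ∈ F}, and σ(A,ε) = Σ_{k∈A} card{j ∈ A : |ρ(j) − ρ(k)| ≤ 2ε}. Then card(A) ≤ √(m_{ρ,ε}(A)) · √(3 σ(A,ε)). -/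
open Set

noncomputable section

/-!
An `ε`-cover `N` of `ρ(A)` gives a map `f : A → N` with `ρ a` within `ε` of `f a`. By
Cauchy–Schwarz, `(card A)²` is at most `card N` times the number of pairs `(j, k)` with `f j = f k`,
and each such pair satisfies `d(ρ j, ρ k) ≤ 2ε`. A smallest cover is no larger than a largest
`ε`-separated subset, because a maximal separated subset is a cover.
-/

section Counting

open Metric
open scoped Finset NNReal

variable {ι κ X : Type*}

lemma sum_card_fiber_eq_sum_sq_card_fiber [DecidableEq κ] {f : ι → κ} {A : Finset ι} {N : Finset κ}
    (hf : MapsTo f A N) :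
    ∑ k ∈ A, #{j ∈ A | f j = f k} = ∑ t ∈ N, #{j ∈ A | f j = t} ^ 2 := by
  rw [← Finset.sum_fiberwise_of_maps_to' hf fun t ↦ #{j ∈ A | f j = t}]
  simp only [Finset.sum_const, smul_eq_mul, sq]

lemma sq_card_le_card_mul_sum_card_fiber [DecidableEq κ] {f : ι → κ} {A : Finset ι} {N : Finset κ}
    (hf : MapsTo f A N) : #A ^ 2 ≤ #N * ∑ k ∈ A, #{j ∈ A | f j = f k} := by
  rw [sum_card_fiber_eq_sum_sq_card_fiber hf, Finset.card_eq_sum_card_fiberwise hf]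
  exact sq_sum_le_card_mul_sum_sq

section PseudoEMetricSpace

variable [PseudoEMetricSpace X] {ε : ℝ≥0}

lemma sq_card_le_card_mul_sum_card_edist_le_of_isCover {ρ : ι → X} {A : Finset ι} {N : Finset X}
    (hN : IsCover ε (ρ '' A) N) :
    #A ^ 2 ≤ #N * ∑ k ∈ A, #{j ∈ A | edist (ρ j) (ρ k) ≤ 2 * ε} := by
  classical
  obtain rfl | ⟨a, -⟩ := A.eq_empty_or_nonempty
  · simp
  have : Nonempty X := ⟨ρ a⟩
  have exists_near : ∀ a ∈ A, ∃ t ∈ N, edist (ρ a) t ≤ ε := fun a ha ↦ hN ⟨a, ha, rfl⟩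
  choose! f hfN hfε using exists_near
  refine (sq_card_le_card_mul_sum_card_fiber hfN).trans ?_
  gcongr with k hk j hj
  intro hjk
  calc edist (ρ j) (ρ k) ≤ edist (ρ j) (f j) + edist (ρ k) (f j) := edist_triangle_right ..
    _ ≤ ε + ε := add_le_add (hfε j hj) (hjk ▸ hfε k hk)
    _ = 2 * ε := (two_mul _).symm

lemma sq_card_le_coveringNumber_mul_sum_card_edist_le (ρ : ι → X) (A : Finset ι) (ε : ℝ≥0) :
    (#A : ℕ∞) ^ 2 ≤
      coveringNumber ε (ρ '' A) * ↑(∑ k ∈ A, #{j ∈ A | edist (ρ j) (ρ k) ≤ 2 * ε}) := by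
  have covering_ne_top : coveringNumber ε (ρ '' A) ≠ ⊤ :=
    ne_top_of_le_ne_top (A.finite_toSet.image ρ).encard_lt_top.ne (coveringNumber_le_encard_self _)
  obtain ⟨C, -, hCfin, hC, hCcard⟩ := exists_set_encard_eq_coveringNumber covering_ne_top
  lift C to Finset X using hCfin
  rw [← hCcard, encard_coe_eq_coe_finsetCard]
  exact_mod_cast sq_card_le_card_mul_sum_card_edist_le_of_isCover hC

lemma isGreatest_card_isSeparated {s : Set X} (hs : packingNumber ε s ≠ ⊤) :
    IsGreatest {n | ∃ F : Finset X, ↑F ⊆ s ∧ IsSeparated ε (F : Set X) ∧ #F = n}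
      (packingNumber ε s).toNat := by
  constructor
  · obtain ⟨F, hFs, hFfin, hF, hFcard⟩ := exists_set_encard_eq_packingNumber hs
    lift F to Finset X using hFfin
    refine ⟨F, hFs, hF, ?_⟩
    rw [← hFcard, encard_coe_eq_coe_finsetCard, ENat.toNat_natCast]
  · rintro _ ⟨F, hFs, hF, rfl⟩
    rw [← ENat.toNat_natCast #F, ← encard_coe_eq_coe_finsetCard]
    exact ENat.toNat_le_toNat (hF.encard_le_packingNumber hFs) hs

end PseudoEMetricSpace

variable [PseudoMetricSpace X]

lemma isSeparated_coe_iff_lt_dist {ε : ℝ≥0} {s : Set X} :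
    IsSeparated ε s ↔ ∀ x ∈ s, ∀ y ∈ s, x ≠ y → ε < dist x y := by
  simp only [IsSeparated, Set.Pairwise, edist_nndist, ENNReal.coe_lt_coe, ← NNReal.coe_lt_coe,
    coe_nndist]

theorem statement17_general (ρ : ι → X) (A : Finset ι) (ε : ℝ≥0)
    (m : ℕ) (hm : m = sSup {n : ℕ | ∃ F : Finset X, ↑F ⊆ ρ '' A ∧
      (∀ s ∈ F, ∀ t ∈ F, s ≠ t → ε < dist s t) ∧ #F = n})
    (σ : ℕ) (hσ : σ = ∑ k ∈ A, #{j ∈ A | dist (ρ j) (ρ k) ≤ 2 * ε}) :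
    (#A : ℝ) ≤ √m * √σ := by
  have packing_ne_top : packingNumber ε (ρ '' A) ≠ ⊤ :=
    ne_top_of_le_ne_top (A.finite_toSet.image ρ).encard_lt_top.ne (packingNumber_le_encard_self _)
  have hm_packing : (m : ℕ∞) = packingNumber ε (ρ '' A) := by
    have hsSup := (isGreatest_card_isSeparated packing_ne_top).csSup_eq
    simp only [isSeparated_coe_iff_lt_dist, Finset.mem_coe] at hsSup
    rw [hm, hsSup, ENat.natCast_toNat packing_ne_top]
  have hσ_edist : σ = ∑ k ∈ A, #{j ∈ A | edist (ρ j) (ρ k) ≤ 2 * ε} := by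
    have edist_le_iff (x y : X) : edist x y ≤ 2 * ε ↔ dist x y ≤ 2 * ε := by
      rw [edist_nndist, dist_nndist]
      norm_cast
    simp only [hσ, edist_le_iff]
  have sq_card_le : #A ^ 2 ≤ m * σ := by
    have sq_card_le_packing := (sq_card_le_coveringNumber_mul_sum_card_edist_le ρ A ε).trans
      (mul_le_mul_left (coveringNumber_le_packingNumber ε (ρ '' A)) _)
    rw [← hm_packing, ← hσ_edist] at sq_card_le_packing
    exact_mod_cast sq_card_le_packing
  rw [← Real.sqrt_mul m.cast_nonneg]
  exact Real.le_sqrt_of_sq_le (mod_cast sq_card_le)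

end Counting

/-- the Cauchy–Schwarz counting inequality from the appendix: for any
function `ρ : ℝ^d → ℝ`, any finite set `A ⊂ ℝ^d` and any `ε > 0`, if
`m = m_{ρ,ε}(A)` is the maximal cardinality of an `ε`-separated subset of `ρ(A)` and
`σ = σ(A,ε) = Σ_{k∈A} card{j ∈ A : |ρ(j) − ρ(k)| ≤ 2ε}`, then
`card A ≤ √m · √(3σ)`. -/
theorem statement17 (d : ℕ) (ρ : EuclideanSpace ℝ (Fin d) → ℝ)
    (A : Finset (EuclideanSpace ℝ (Fin d))) (ε : ℝ) (hε : 0 < ε)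
    (m : ℕ) (hm : m = sSup {n : ℕ | ∃ F : Finset ℝ, ↑F ⊆ ρ '' ↑A ∧
      (∀ s ∈ F, ∀ t ∈ F, s ≠ t → ε < |s - t|) ∧ F.card = n})
    (σ : ℕ) (hσ : σ = ∑ k ∈ A, (A.filter fun j => |ρ j - ρ k| ≤ 2 * ε).card) :
    (A.card : ℝ) ≤ Real.sqrt m * Real.sqrt (3 * σ) := by
  refine (statement17_general ρ A ⟨ε, hε.le⟩ m hm σ hσ).trans ?_
  gcongr
  exact le_mul_of_one_le_left σ.cast_nonneg (by norm_num)

end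
end

section
/- Let Ω be a bounded open convex set in ℝ² containing the origin in its interior and satisfying sup_{θ∈S¹} sup_{δ>0} δ^{-1/2} μ(θ,δ) < ∞ (so that Ω is strictly convex and, for every P ∈ ℝ²∖{0}, the boundary point of Ω* at P/ρ*(P) has a well-defined outward unit normal n*_P, namely the unit vector in the direction of the unique point of ∂Ω having P as an outward normal direction). Then there exists a constant C₁, depending only on Ω, with the following property: if r ≥ 10, h ≥ 1, and I is a line segment with endpoints P, Q ∈ ℤ² whose threefold concentric parallel dilate 3I is contained in the annulus 𝒜(r,h) = {x ∈ ℝ² : r ≤ ρ*(x) ≤ r + 1/h}, then the angle ψ = ∠(n*_P, n*_Q) between the two normals (the nonnegative angle less than π) satisfies ψ ≤ C₁ arctan(1/(h|I|)), where |I| is the length of I. -/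
/-!
Rescaled, an outward normal `n*_P` of `{ρ* ≤ 1}` is a subgradient `x` of `ρ*` at `P`; let `x'` be
the one at `Q`, and `d = Q - P`. Since `ρ*` oscillates by at most `ε = 1/h` on `3I`, which contains
`P ± d` and `Q ± d`, both `|⟪x, d⟫|` and `|⟪x', d⟫|` are at most `ε`, whence also
`|⟪x - x', P⟫| ≤ 2ε`. If `‖d‖` is large compared with `ε`, then `d` is nearly orthogonal to `x`
while `⟪x, P⟫ = ρ*(P)` is comparable with `‖x‖ ‖P‖`, so `P` and `d` are transversal and the two
inner products control `x - x'`: one gets `‖x - x'‖ = O(ε/‖d‖)`. If `‖d‖ = O(ε)`, this is trivial.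
-/

open MeasureTheory Set
open scoped Pointwise RealInnerProductSpace NNReal ENNReal

noncomputable section

section Angle

variable {E : Type*} [NormedAddCommGroup E] [InnerProductSpace ℝ E]

theorem norm_mul_norm_mul_angle_sq_le_norm_sub_sq (x y : E) :
    ‖x‖ * ‖y‖ * (2 / Real.pi * InnerProductGeometry.angle x y) ^ 2 ≤ ‖x - y‖ ^ 2 := by
  set ψ := InnerProductGeometry.angle x y
  have hψ : |ψ| ≤ Real.pi := by
    rw [abs_of_nonneg (InnerProductGeometry.angle_nonneg x y)]
    exact InnerProductGeometry.angle_le_pi x y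
  have hcos : (2 / Real.pi * ψ) ^ 2 ≤ 2 * (1 - Real.cos ψ) := by
    linear_combination 2 * Real.cos_le_one_sub_mul_cos_sq hψ
  calc ‖x‖ * ‖y‖ * (2 / Real.pi * ψ) ^ 2
      ≤ ‖x‖ * ‖y‖ * (2 * (1 - Real.cos ψ)) := by gcongr
    _ ≤ (‖x‖ - ‖y‖) ^ 2 + ‖x‖ * ‖y‖ * (2 * (1 - Real.cos ψ)) :=
        le_add_of_nonneg_left (sq_nonneg _)
    _ = ‖x - y‖ ^ 2 := by
        rw [norm_sub_sq_real, ← InnerProductGeometry.cos_angle_mul_norm_mul_norm x y]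
        ring

theorem mul_angle_le_pi_div_two_mul_norm_sub {c : ℝ} (hc : 0 ≤ c) {x y : E} (hx : c ≤ ‖x‖)
    (hy : c ≤ ‖y‖) : c * InnerProductGeometry.angle x y ≤ Real.pi / 2 * ‖x - y‖ := by
  set ψ := InnerProductGeometry.angle x y
  have hchord : c * (2 / Real.pi * ψ) ≤ ‖x - y‖ := by
    refine (abs_le_of_sq_le_sq' ?_ (norm_nonneg _)).2
    calc (c * (2 / Real.pi * ψ)) ^ 2 = c * c * (2 / Real.pi * ψ) ^ 2 := by ring
      _ ≤ ‖x‖ * ‖y‖ * (2 / Real.pi * ψ) ^ 2 := by gcongr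
      _ ≤ ‖x - y‖ ^ 2 := norm_mul_norm_mul_angle_sq_le_norm_sub_sq x y
  calc c * ψ = Real.pi / 2 * (c * (2 / Real.pi * ψ)) := by field_simp
    _ ≤ Real.pi / 2 * ‖x - y‖ := by gcongr

end Angle

section Arctan

theorem half_le_arctan {s : ℝ} (h0 : 0 ≤ s) (h1 : s ≤ 1) : s / 2 ≤ Real.arctan s :=
  calc s / 2 ≤ s / √(1 + s ^ 2) := by
        gcongr
        exact Real.sqrt_le_iff.2 ⟨by norm_num, by nlinarith⟩
    _ = Real.sin (Real.arctan s) := (Real.sin_arctan s).symm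
    _ ≤ Real.arctan s := Real.sin_le (Real.arctan_nonneg.2 h0)

theorem le_max_mul_arctan {a B s : ℝ} (hs : 0 ≤ s) (hpi : a ≤ Real.pi) (hB : a ≤ B * s) :
    a ≤ max 4 (2 * B) * Real.arctan s := by
  rcases le_total s 1 with hs1 | hs1
  · calc a ≤ 2 * B * (s / 2) := by linarith
      _ ≤ max 4 (2 * B) * (s / 2) := by gcongr; exact le_max_right _ _
      _ ≤ max 4 (2 * B) * Real.arctan s := by gcongr; exact half_le_arctan hs hs1
  · calc a ≤ 4 * Real.arctan 1 := by rw [Real.arctan_one]; linarith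
      _ ≤ max 4 (2 * B) * Real.arctan s := by
          gcongr
          exact le_max_left _ _

end Arctan

section AreaForm

variable {E : Type*} [NormedAddCommGroup E] [InnerProductSpace ℝ E]
  [Fact (Module.finrank ℝ E = 2)] (o : Orientation ℝ E (Fin 2))

theorem norm_mul_abs_areaForm_le (w x y : E) :
    ‖w‖ * |o.areaForm x y| ≤ |⟪w, x⟫| * ‖y‖ + ‖x‖ * |⟪w, y⟫| := by
  rcases eq_or_ne w 0 with rfl | hw
  · simp
  refine le_of_mul_le_mul_left ?_ (norm_pos_iff.2 hw)
  calc ‖w‖ * (‖w‖ * |o.areaForm x y|) = |‖w‖ ^ 2 * o.areaForm x y| := by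
        rw [abs_mul, abs_sq]; ring
    _ = |⟪w, x⟫ * o.areaForm w y - o.areaForm w x * ⟪w, y⟫| := by rw [o.inner_mul_areaForm_sub]
    _ ≤ |⟪w, x⟫| * |o.areaForm w y| + |o.areaForm w x| * |⟪w, y⟫| := by
        simpa only [abs_mul] using
          abs_sub (⟪w, x⟫ * o.areaForm w y) (o.areaForm w x * ⟪w, y⟫)
    _ ≤ |⟪w, x⟫| * (‖w‖ * ‖y‖) + ‖w‖ * ‖x‖ * |⟪w, y⟫| := by
        gcongr <;> exact o.abs_areaForm_le _ _
    _ = ‖w‖ * (|⟪w, x⟫| * ‖y‖ + ‖x‖ * |⟪w, y⟫|) := by ring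

theorem norm_mul_abs_inner_le (w x y : E) :
    ‖w‖ * |⟪x, y⟫| ≤ |⟪w, x⟫| * ‖y‖ + ‖x‖ * |o.areaForm w y| := by
  rcases eq_or_ne w 0 with rfl | hw
  · simp
  refine le_of_mul_le_mul_left ?_ (norm_pos_iff.2 hw)
  calc ‖w‖ * (‖w‖ * |⟪x, y⟫|) = |‖w‖ ^ 2 * ⟪x, y⟫| := by rw [abs_mul, abs_sq]; ring
    _ = |⟪w, x⟫ * ⟪w, y⟫ + o.areaForm w x * o.areaForm w y| := by
        rw [o.inner_mul_inner_add_areaForm_mul_areaForm]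
    _ ≤ |⟪w, x⟫| * |⟪w, y⟫| + |o.areaForm w x| * |o.areaForm w y| := by
        simpa only [abs_mul] using
          abs_add_le (⟪w, x⟫ * ⟪w, y⟫) (o.areaForm w x * o.areaForm w y)
    _ ≤ |⟪w, x⟫| * (‖w‖ * ‖y‖) + ‖w‖ * ‖x‖ * |o.areaForm w y| := by
        gcongr
        · exact abs_real_inner_le_norm _ _
        · exact o.abs_areaForm_le _ _
    _ = ‖w‖ * (|⟪w, x⟫| * ‖y‖ + ‖x‖ * |o.areaForm w y|) := by ring

end AreaForm

section TripleSegment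

variable {V : Type*} [AddCommGroup V] [Module ℝ V]

/-- The segment `3I` concentric with and parallel to `I = [p, q]`, of three times its length. -/
def tripleSegment (p q : V) : Set V := segment ℝ ((2 : ℝ) • p - q) ((2 : ℝ) • q - p)

theorem tripleSegment_comm (p q : V) : tripleSegment p q = tripleSegment q p :=
  segment_symm ℝ _ _

theorem two_smul_sub_mem_tripleSegment (p q : V) : (2 : ℝ) • p - q ∈ tripleSegment p q :=
  left_mem_segment ℝ _ _

theorem left_mem_tripleSegment (p q : V) : p ∈ tripleSegment p q :=
  ⟨2 / 3, 1 / 3, by norm_num, by norm_num, by norm_num, by module⟩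

theorem right_mem_tripleSegment (p q : V) : q ∈ tripleSegment p q :=
  tripleSegment_comm q p ▸ left_mem_tripleSegment q p

end TripleSegment

section Subgradient

variable {E : Type*} [NormedAddCommGroup E] [InnerProductSpace ℝ E]

/-- `ρ` is positively homogeneous of degree one, as support functions and gauges are. -/
def IsPosHomogeneous (ρ : E → ℝ) : Prop := ∀ t : ℝ, 0 < t → ∀ y, ρ (t • y) = t * ρ y

/-- `x` is a subgradient of `f` at `p`. No convexity of `f` is built in. For the support function
`ρ*` of `Ω` the subgradients at `p` are the points of the closed convex hull of `Ω` having `p` as an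
outward normal direction. -/
def IsSubgradientAt (f : E → ℝ) (p x : E) : Prop := ∀ y, f p + ⟪x, y - p⟫ ≤ f y

namespace IsSubgradientAt

theorem abs_inner_sub_le {f : E → ℝ} {p q x : E} {ε : ℝ} (hx : IsSubgradientAt f p x)
    (hosc : ∀ y ∈ tripleSegment p q, ∀ z ∈ tripleSegment p q, f y ≤ f z + ε) :
    |⟪x, q - p⟫| ≤ ε := by
  have hp := left_mem_tripleSegment p q
  have hforward := (hx q).trans (hosc q (right_mem_tripleSegment p q) p hp)
  have hbackward := (hx _).trans (hosc _ (two_smul_sub_mem_tripleSegment p q) p hp)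
  rw [show (2 : ℝ) • p - q - p = -(q - p) by module, inner_neg_right] at hbackward
  exact abs_le.2 ⟨by linarith, by linarith⟩

theorem abs_inner_sub_le_of_right {f : E → ℝ} {p q x : E} {ε : ℝ} (hx : IsSubgradientAt f q x)
    (hosc : ∀ y ∈ tripleSegment p q, ∀ z ∈ tripleSegment p q, f y ≤ f z + ε) :
    |⟪x, q - p⟫| ≤ ε := by
  rw [tripleSegment_comm] at hosc
  rw [← neg_sub, inner_neg_right, abs_neg]
  exact hx.abs_inner_sub_le hosc

theorem abs_inner_sub_sub_le {f : E → ℝ} {p q x x' : E} {ε : ℝ} (hx : IsSubgradientAt f p x)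
    (hx' : IsSubgradientAt f q x')
    (hosc : ∀ y ∈ tripleSegment p q, ∀ z ∈ tripleSegment p q, f y ≤ f z + ε) :
    |⟪x - x', q - p⟫| ≤ 2 * ε := by
  rw [inner_sub_left]
  linarith [abs_sub ⟪x, q - p⟫ ⟪x', q - p⟫, hx.abs_inner_sub_le hosc,
    hx'.abs_inner_sub_le_of_right hosc]

variable {ρ : E → ℝ} {c R : ℝ} {p x : E}

theorem inner_eq (hx : IsSubgradientAt ρ p x)
    (hom : IsPosHomogeneous ρ) : ⟪x, p⟫ = ρ p := by
  have hdouble := hx ((2 : ℝ) • p)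
  have hhalf := hx ((1 / 2 : ℝ) • p)
  rw [hom _ (by norm_num), inner_sub_right, real_inner_smul_right] at hdouble hhalf
  linarith

theorem inner_le (hx : IsSubgradientAt ρ p x)
    (hom : IsPosHomogeneous ρ) (y : E) : ⟪x, y⟫ ≤ ρ y := by
  have := hx y
  rw [inner_sub_right, hx.inner_eq hom] at this
  linarith

theorem le_norm (hx : IsSubgradientAt ρ p x)
    (hom : IsPosHomogeneous ρ) (hlo : ∀ y, c * ‖y‖ ≤ ρ y) (hp : p ≠ 0) :
    c ≤ ‖x‖ := by
  refine le_of_mul_le_mul_right ?_ (norm_pos_iff.2 hp)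
  calc c * ‖p‖ ≤ ρ p := hlo p
    _ = ⟪x, p⟫ := (hx.inner_eq hom).symm
    _ ≤ ‖x‖ * ‖p‖ := real_inner_le_norm x p

theorem norm_le (hx : IsSubgradientAt ρ p x)
    (hom : IsPosHomogeneous ρ) (hR : 0 ≤ R) (hup : ∀ y, ρ y ≤ R * ‖y‖) :
    ‖x‖ ≤ R := by
  rcases eq_or_ne x 0 with rfl | hx0
  · rwa [norm_zero]
  refine le_of_mul_le_mul_right ?_ (norm_pos_iff.2 hx0)
  calc ‖x‖ * ‖x‖ = ⟪x, x⟫ := (real_inner_self_eq_norm_mul_norm x).symm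
    _ ≤ ρ x := hx.inner_le hom x
    _ ≤ R * ‖x‖ := hup x

theorem abs_inner_sub_left_le {q x' : E} {ε : ℝ} (hx : IsSubgradientAt ρ p x)
    (hx' : IsSubgradientAt ρ q x') (hom : IsPosHomogeneous ρ)
    (hosc : ∀ y ∈ tripleSegment p q, ∀ z ∈ tripleSegment p q, ρ y ≤ ρ z + ε) :
    |⟪x - x', p⟫| ≤ 2 * ε := by
  have hp := left_mem_tripleSegment p q
  have hq := right_mem_tripleSegment p q
  have hx'p : ⟪x', p⟫ = ρ q - ⟪x', q - p⟫ := by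
    rw [← hx'.inner_eq hom, inner_sub_right]; ring
  obtain ⟨hlower, hupper⟩ := abs_le.1 (hx'.abs_inner_sub_le_of_right hosc)
  rw [inner_sub_left, hx.inner_eq hom, hx'p, abs_le]
  exact ⟨by linarith [hosc q hq p hp], by linarith [hosc p hp q hq]⟩

end IsSubgradientAt

theorem exists_pos_isSubgradientAt_smul_of_normal {ρ : E → ℝ} {p n : E}
    (hom : IsPosHomogeneous ρ) (hpos : ∀ y, y ≠ 0 → 0 < ρ y)
    (hp : p ≠ 0) (hn : n ≠ 0) (hnormal : ∀ y, ρ y ≤ 1 → ⟪y - (ρ p)⁻¹ • p, n⟫ ≤ 0) :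
    ∃ k : ℝ, 0 < k ∧ IsSubgradientAt ρ p (k • n) := by
  have hρp := hpos p hp
  have hle : ∀ y, y ≠ 0 → ρ p * ⟪n, y⟫ ≤ ⟪n, p⟫ * ρ y := by
    intro y hy
    have hρy := hpos y hy
    have h := hnormal ((ρ y)⁻¹ • y) (by rw [hom _ (by positivity), inv_mul_cancel₀ hρy.ne'])
    rw [real_inner_comm, inner_sub_right, real_inner_smul_right, real_inner_smul_right,
      sub_nonpos, inv_mul_le_iff₀ hρy, mul_left_comm, le_inv_mul_iff₀ hρp] at h
    linarith
  have hnp : 0 < ⟪n, p⟫ := by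
    have hnn : 0 < ρ p * ⟪n, n⟫ := mul_pos hρp (real_inner_self_pos.2 hn)
    exact pos_of_mul_pos_left (hnn.trans_le (hle n hn)) (hpos n hn).le
  have hρ0 : ρ 0 = 0 := by
    have := hom 2 two_pos 0
    rw [smul_zero] at this
    linarith
  refine ⟨ρ p / ⟪n, p⟫, by positivity, fun y => ?_⟩
  have hy : ρ p / ⟪n, p⟫ * ⟪n, y⟫ ≤ ρ y := by
    rcases eq_or_ne y 0 with rfl | hy0
    · simp [hρ0]
    · rw [div_mul_eq_mul_div, div_le_iff₀' hnp]
      exact hle y hy0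
  rw [real_inner_smul_left, inner_sub_right, mul_sub, div_mul_cancel₀ _ hnp.ne']
  linarith

end Subgradient

section Plane

variable {E : Type*} [NormedAddCommGroup E] [InnerProductSpace ℝ E]
  [Fact (Module.finrank ℝ E = 2)] {ρ : E → ℝ} {c R ε : ℝ} {p q : E}

theorem IsSubgradientAt.mul_norm_le_abs_areaForm {x d : E} (o : Orientation ℝ E (Fin 2))
    (hx : IsSubgradientAt ρ p x) (hom : IsPosHomogeneous ρ)
    (hR : 0 ≤ R) (hlo : ∀ y, c * ‖y‖ ≤ ρ y) (hup : ∀ y, ρ y ≤ R * ‖y‖)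
    (hxd : 2 * |⟪x, d⟫| ≤ c * ‖d‖) : ρ p * ‖d‖ ≤ 2 * R * |o.areaForm d p| := by
  have hnear : |⟪d, x⟫| * ‖p‖ ≤ ρ p * ‖d‖ / 2 :=
    calc |⟪d, x⟫| * ‖p‖ ≤ c * ‖d‖ / 2 * ‖p‖ := by
          rw [real_inner_comm]; gcongr; linarith
      _ = c * ‖p‖ * ‖d‖ / 2 := by ring
      _ ≤ ρ p * ‖d‖ / 2 := by gcongr; exact hlo p
  have hinner : ‖d‖ * ρ p ≤ ρ p * ‖d‖ / 2 + R * |o.areaForm d p| :=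
    calc ‖d‖ * ρ p ≤ ‖d‖ * |⟪x, p⟫| := by
          rw [hx.inner_eq hom]; gcongr; exact le_abs_self _
      _ ≤ |⟪d, x⟫| * ‖p‖ + ‖x‖ * |o.areaForm d p| := norm_mul_abs_inner_le o d x p
      _ ≤ ρ p * ‖d‖ / 2 + R * |o.areaForm d p| := by
          gcongr; exact hx.norm_le hom hR hup
  linarith

theorem IsSubgradientAt.mul_norm_mul_norm_le {x d w : E} (hx : IsSubgradientAt ρ p x)
    (hom : IsPosHomogeneous ρ) (hR : 0 ≤ R) (hlo : ∀ y, c * ‖y‖ ≤ ρ y)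
    (hup : ∀ y, ρ y ≤ R * ‖y‖) (hxd : 2 * |⟪x, d⟫| ≤ c * ‖d‖)
    (hwd : |⟪w, d⟫| ≤ ε) (hwp : |⟪w, p⟫| ≤ ε) :
    ρ p * ‖d‖ * ‖w‖ ≤ 2 * R * ε * (‖p‖ + ‖d‖) := by
  have := FiniteDimensional.of_fact_finrank_eq_two (K := ℝ) (V := E)
  let o : Orientation ℝ E (Fin 2) := (Module.finBasisOfFinrankEq ℝ E Fact.out).orientation
  calc ρ p * ‖d‖ * ‖w‖ ≤ 2 * R * |o.areaForm d p| * ‖w‖ :=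
        mul_le_mul_of_nonneg_right (hx.mul_norm_le_abs_areaForm o hom hR hlo hup hxd)
          (norm_nonneg w)
    _ = 2 * R * (‖w‖ * |o.areaForm d p|) := by ring
    _ ≤ 2 * R * (ε * ‖p‖ + ‖d‖ * ε) := by
        gcongr
        refine (norm_mul_abs_areaForm_le o w d p).trans ?_
        gcongr
    _ = 2 * R * ε * (‖p‖ + ‖d‖) := by ring

theorem IsSubgradientAt.mul_dist_mul_norm_sub_le {x x' : E} (hx : IsSubgradientAt ρ p x)
    (hx' : IsSubgradientAt ρ q x') (hom : IsPosHomogeneous ρ)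
    (hc : 0 < c) (hR : 0 ≤ R) (hlo : ∀ y, c * ‖y‖ ≤ ρ y) (hup : ∀ y, ρ y ≤ R * ‖y‖)
    (hosc : ∀ y ∈ tripleSegment p q, ∀ z ∈ tripleSegment p q, ρ y ≤ ρ z + ε) :
    c * dist p q * ‖x - x'‖ ≤ 16 * R * ε := by
  rw [dist_eq_norm_sub']
  set d := q - p
  have hp := left_mem_tripleSegment p q
  have hq := right_mem_tripleSegment p q
  have hε : 0 ≤ ε := by linarith [hosc p hp p hp]
  rcases le_or_gt (c * ‖d‖) (4 * ε) with hshort | hlong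
  · calc c * ‖d‖ * ‖x - x'‖ ≤ 4 * ε * (R + R) := by
          gcongr
          exact (norm_sub_le x x').trans
            (add_le_add (hx.norm_le hom hR hup) (hx'.norm_le hom hR hup))
      _ ≤ 16 * R * ε := by nlinarith [mul_nonneg hR hε]
  have hcd : c * ‖d‖ ≤ 2 * ρ p + ε :=
    calc c * ‖d‖ ≤ c * (‖q‖ + ‖p‖) := by gcongr; exact norm_sub_le q p
      _ ≤ 2 * ρ p + ε := by linarith [hlo p, hlo q, hosc q hq p hp]
  have hρp : 0 < ρ p := by linarith
  have hxd : |⟪x, d⟫| ≤ ε := hx.abs_inner_sub_le hosc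
  refine le_of_mul_le_mul_left ?_ hρp
  calc ρ p * (c * ‖d‖ * ‖x - x'‖) = c * (ρ p * ‖d‖ * ‖x - x'‖) := by ring
    _ ≤ c * (2 * R * (2 * ε) * (‖p‖ + ‖d‖)) :=
        mul_le_mul_of_nonneg_left
          (hx.mul_norm_mul_norm_le hom hR hlo hup (by linarith)
            (hx.abs_inner_sub_sub_le hx' hosc) (hx.abs_inner_sub_left_le hx' hom hosc)) hc.le
    _ = 4 * R * ε * (c * ‖p‖ + c * ‖d‖) := by ring
    _ ≤ 4 * R * ε * (4 * ρ p) := by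
        gcongr
        linarith [hlo p]
    _ = ρ p * (16 * R * ε) := by ring

theorem angle_le_div_dist_of_normals {n n' : E}
    (hom : IsPosHomogeneous ρ) (hc : 0 < c) (hR : 0 ≤ R)
    (hlo : ∀ y, c * ‖y‖ ≤ ρ y) (hup : ∀ y, ρ y ≤ R * ‖y‖)
    (hosc : ∀ y ∈ tripleSegment p q, ∀ z ∈ tripleSegment p q, ρ y ≤ ρ z + ε)
    (hp : p ≠ 0) (hq : q ≠ 0) (hpq : p ≠ q) (hn : n ≠ 0) (hn' : n' ≠ 0)
    (hnormal : ∀ y, ρ y ≤ 1 → ⟪y - (ρ p)⁻¹ • p, n⟫ ≤ 0)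
    (hnormal' : ∀ y, ρ y ≤ 1 → ⟪y - (ρ q)⁻¹ • q, n'⟫ ≤ 0) :
    InnerProductGeometry.angle n n' ≤ 8 * Real.pi * R / c ^ 2 * (ε / dist p q) := by
  have hpos : ∀ y, y ≠ 0 → 0 < ρ y := fun y hy =>
    (mul_pos hc (norm_pos_iff.2 hy)).trans_le (hlo y)
  obtain ⟨k, hk, hx⟩ := exists_pos_isSubgradientAt_smul_of_normal hom hpos hp hn hnormal
  obtain ⟨k', hk', hx'⟩ := exists_pos_isSubgradientAt_smul_of_normal hom hpos hq hn' hnormal'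
  have hangle := mul_angle_le_pi_div_two_mul_norm_sub hc.le (hx.le_norm hom hlo hp)
    (hx'.le_norm hom hlo hq)
  rw [InnerProductGeometry.angle_smul_left_of_pos _ _ hk,
    InnerProductGeometry.angle_smul_right_of_pos _ _ hk'] at hangle
  have hd : 0 < dist p q := dist_pos.2 hpq
  rw [div_mul_div_comm, le_div_iff₀ (by positivity)]
  calc InnerProductGeometry.angle n n' * (c ^ 2 * dist p q)
      = c * dist p q * (c * InnerProductGeometry.angle n n') := by ring
    _ ≤ c * dist p q * (Real.pi / 2 * ‖k • n - k' • n'‖) := by gcongr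
    _ = Real.pi / 2 * (c * dist p q * ‖k • n - k' • n'‖) := by ring
    _ ≤ Real.pi / 2 * (16 * R * ε) :=
        mul_le_mul_of_nonneg_left (hx.mul_dist_mul_norm_sub_le hx' hom hc hR hlo hup hosc)
          (by positivity)
    _ = 8 * Real.pi * R * ε := by ring

end Plane

section SupportFunction

variable {Ω : Set E2} {c R : ℝ}

theorem isPosHomogeneous_suppFn (Ω : Set E2) : IsPosHomogeneous (suppFn Ω) := by
  intro t ht y
  rw [suppFn, suppFn, ← smul_eq_mul, ← Real.sSup_smul_of_nonneg ht.le, ← image_smul, image_image]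
  simp only [real_inner_smul_right, smul_eq_mul]

theorem mul_norm_mem_upperBounds_image_inner (hR : ∀ x ∈ Ω, ‖x‖ ≤ R) (y : E2) :
    R * ‖y‖ ∈ upperBounds ((fun x => ⟪x, y⟫) '' Ω) := by
  rintro _ ⟨x, hx, rfl⟩
  exact (real_inner_le_norm x y).trans (by gcongr; exact hR x hx)

theorem suppFn_le_mul_norm (hR0 : 0 ≤ R) (hR : ∀ x ∈ Ω, ‖x‖ ≤ R) (y : E2) :
    suppFn Ω y ≤ R * ‖y‖ :=
  Real.sSup_le (mul_norm_mem_upperBounds_image_inner hR y) (by positivity)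

theorem mul_norm_le_suppFn_s19 (hbdd : Bornology.IsBounded Ω) (hc : 0 ≤ c)
    (hball : Metric.closedBall 0 c ⊆ Ω) (y : E2) : c * ‖y‖ ≤ suppFn Ω y := by
  obtain ⟨R, hR⟩ := hbdd.exists_norm_le
  have hbdd_above : BddAbove ((fun x => ⟪x, y⟫) '' Ω) :=
    ⟨_, mul_norm_mem_upperBounds_image_inner hR y⟩
  rcases eq_or_ne y 0 with rfl | hy
  · exact le_csSup hbdd_above ⟨0, hball (Metric.mem_closedBall_self hc), by simp⟩
  have hy' : ‖y‖ ≠ 0 := norm_ne_zero_iff.2 hy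
  refine le_csSup hbdd_above ⟨(c / ‖y‖) • y, hball ?_, ?_⟩
  · rw [mem_closedBall_zero_iff, norm_smul, Real.norm_of_nonneg (by positivity),
      div_mul_cancel₀ c hy']
  · simp only [real_inner_smul_left, real_inner_self_eq_norm_sq]
    field_simp

end SupportFunction

theorem statement19_general (Ω : Set E2) (hbdd : Bornology.IsBounded Ω)
    (h0 : (0 : E2) ∈ interior Ω) :
    ∃ C₁ : ℝ, 0 < C₁ ∧ ∀ r h : ℝ, 0 < r → 0 < h → ∀ p q : E2, p ≠ q →
      tripleSegment p q ⊆ {x : E2 | r ≤ suppFn Ω x ∧ suppFn Ω x ≤ r + 1 / h} →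
      ∀ n n' : E2, n ≠ 0 → n' ≠ 0 →
        (∀ y : E2, suppFn Ω y ≤ 1 → ⟪y - (suppFn Ω p)⁻¹ • p, n⟫ ≤ 0) →
        (∀ y : E2, suppFn Ω y ≤ 1 → ⟪y - (suppFn Ω q)⁻¹ • q, n'⟫ ≤ 0) →
        InnerProductGeometry.angle n n' ≤ C₁ * Real.arctan (1 / (h * dist p q)) := by
  obtain ⟨R, hR, hnorm⟩ := hbdd.exists_pos_norm_le
  obtain ⟨c, hc, hball⟩ := Metric.nhds_basis_closedBall.mem_iff.1 (mem_interior_iff_mem_nhds.1 h0)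
  have hup := suppFn_le_mul_norm hR.le hnorm
  refine ⟨max 4 (2 * (8 * Real.pi * R / c ^ 2)), by positivity, ?_⟩
  intro r h hr hh p q hpq hannulus n n' hn hn' hnormal hnormal'
  have hne : ∀ y ∈ tripleSegment p q, y ≠ 0 := by
    rintro y hy rfl
    have := (hannulus hy).1.trans (hup 0)
    rw [norm_zero, mul_zero] at this
    linarith
  have hosc : ∀ y ∈ tripleSegment p q, ∀ z ∈ tripleSegment p q,
      suppFn Ω y ≤ suppFn Ω z + 1 / h := fun y hy z hz => by
    linarith [(hannulus hy).2, (hannulus hz).1]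
  have : Fact (Module.finrank ℝ E2 = 2) := ⟨finrank_euclideanSpace_fin⟩
  refine le_max_mul_arctan (by positivity) (InnerProductGeometry.angle_le_pi n n') ?_
  rw [← div_div]
  exact angle_le_div_dist_of_normals (isPosHomogeneous_suppFn Ω) hc hR.le
    (mul_norm_le_suppFn_s19 hbdd hc.le hball) hup hosc (hne p (left_mem_tripleSegment p q))
    (hne q (right_mem_tripleSegment p q)) hpq hn hn' hnormal hnormal'

/-- the angle estimate (6.4): let `Ω` be a bounded open convex planar
domain containing the origin with curvature bounded below in the generalized sense (so `Ω`
is strictly convex and each boundary point of `Ω*` has a unique outward unit normal).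
There is a constant `C₁ > 0` such that whenever `r ≥ 10`, `h ≥ 1`, and `I` is a line
segment with endpoints `P ≠ Q ∈ ℤ²` whose threefold concentric dilate `3I` (the segment
from `2P − Q` to `2Q − P`) lies in the annulus `𝒜(r,h) = {r ≤ ρ* ≤ r + 1/h}`, the angle
`ψ = ∠(n*_P, n*_Q)` between the outward unit normals of `∂Ω*` at the boundary points
`P/ρ*(P)` and `Q/ρ*(Q)` (characterized by the supporting property hypothesized below)
satisfies `ψ ≤ C₁ arctan(1/(h|I|))`. -/
theorem statement19 (Ω : Set E2) (hconv : Convex ℝ Ω) (hopen : IsOpen Ω)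
    (hbdd : Bornology.IsBounded Ω) (h0 : (0 : E2) ∈ Ω) (hcurv : CurvBddBelow Ω) :
    ∃ C₁ : ℝ, 0 < C₁ ∧ ∀ r h : ℝ, 10 ≤ r → 1 ≤ h → ∀ P Q : Fin 2 → ℤ, ek P ≠ ek Q →
      segment ℝ ((2 : ℝ) • ek P - ek Q) ((2 : ℝ) • ek Q - ek P) ⊆
        {x : E2 | r ≤ suppFn Ω x ∧ suppFn Ω x ≤ r + 1 / h} →
      ∀ nP nQ : E2, ‖nP‖ = 1 → ‖nQ‖ = 1 →
        (∀ y : E2, suppFn Ω y ≤ 1 → ⟪y - (suppFn Ω (ek P))⁻¹ • ek P, nP⟫ ≤ 0) →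
        (∀ y : E2, suppFn Ω y ≤ 1 → ⟪y - (suppFn Ω (ek Q))⁻¹ • ek Q, nQ⟫ ≤ 0) →
        InnerProductGeometry.angle nP nQ ≤
          C₁ * Real.arctan (1 / (h * dist (ek P) (ek Q))) := by
  obtain ⟨C₁, hC₁, hangle⟩ :=
    statement19_general Ω hbdd (hopen.interior_eq.symm ▸ h0)
  exact ⟨C₁, hC₁, fun r h hr hh P Q hPQ hseg nP nQ hnP hnQ =>
    hangle r h (by linarith) (by linarith) (ek P) (ek Q) hPQ hseg nP nQ
      (norm_ne_zero_iff.1 (hnP ▸ one_ne_zero)) (norm_ne_zero_iff.1 (hnQ ▸ one_ne_zero))⟩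

end
end
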